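/- arXiv:math/0201321 — 9 statements merged into one kernel-verified Lean document; each statement's English description precedes it below -/
import Mathlib

section
/- Let K be a field of characteristic different from 3 containing a primitive cube root of unity ζ, let a ∈ K be a nonzero element which is not a cube in K, let L = K(α) where α³ = a, let σ be the generator of Gal(L/K) with σ(α) = ζα, let Tr = Tr_{L/K} and N = N_{L/K}, let β ∈ L be nonzero with b = N(β), write β = β₀ + β₁α + β₂α² with β₀, β₁, β₂ ∈ K, and set u = β/σ²(β). Let λ ∈ K and define the cubic form F = (Tr(u) + λ)(a²X³ + aY³ + Z³) + 3·Tr(αu)(aX²Z + aY²X + Z²Y) + 3·Tr(α²u)(aX²Y + Y²Z + Z²X) + 3(2a·Tr(u) − λa)·XYZ. Let M_S = M_{a,3} and M_T = D₃(β₀I + β₁M_S + β₂M_S²). Then all coefficients of F lie in K, and F satisfies F(M_S·(X,Y,Z)ᵀ) = a·F(X,Y,Z) and F(M_T·(X,Y,Z)ᵀ) = b·F(X,Y,Z). -/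
/-!
Put `ℓ_μ = μ² X + μ Y + Z`. For `μ³ = a` the row vector `(μ², μ, 1)` is a left eigenvector of `M_S`
with eigenvalue `μ`, and expanding cubes gives
`F = Tr (u ℓ_α³) + λ ℓ_α ℓ_{ζα} ℓ_{ζ²α}`, where the trace acts on coefficients only
(`cubic_eq_sum_cubes`). Composing with `M_S` multiplies each `ℓ_μ³`, and the product of the three
forms, by `a`. Composing with `D₃` sends `ℓ_μ` to `ζ² ℓ_{ζ²μ}`, so composing with `M_T` sends
`ℓ_{σⁱα}` to `ζ² σⁱ⁺²(β) ℓ_{σⁱ⁺²α}`. The product of the forms is then multiplied by `N(β) = b`, and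
the sum of cubes as well, because `σⁱ(u) σⁱ⁺²(β)³ = b σⁱ⁺²(u)`.

The coefficients lie in `K` because every element of `L` is `c₀ + c₁ α + c₂ α²` with `cᵢ` in `K`,
and the trace of such an element is `3 c₀` (`trace_mem_range`).
-/

/-- The linear form `μ² X + μ Y + Z`. -/
def eigenForm {L : Type*} [Field L] (μ X Y Z : L) : L := μ ^ 2 * X + μ * Y + Z

/-- The elements `c₀ + c₁ α + c₂ α²` form a subalgebra since `α³ ∈ K`, hence exhaust `K[α]`. -/
lemma exists_coords {K L : Type*} [Field K] [Field L] [Algebra K L] {a : K} {α : L}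
    (hα : α ^ 3 = algebraMap K L a) (hgen : Algebra.adjoin K {α} = ⊤) (s : L) :
    ∃ c₀ c₁ c₂ : K,
      s = algebraMap K L c₀ + algebraMap K L c₁ * α + algebraMap K L c₂ * α ^ 2 := by
  have hs : s ∈ Algebra.adjoin K {α} := by rw [hgen]; trivial
  induction hs using Algebra.adjoin_induction with
  | mem x hx => exact ⟨0, 1, 0, by simp [Set.mem_singleton_iff.mp hx]⟩
  | algebraMap r => exact ⟨r, 0, 0, by simp⟩
  | add x y _ _ hx hy =>
    obtain ⟨c₀, c₁, c₂, rfl⟩ := hx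
    obtain ⟨d₀, d₁, d₂, rfl⟩ := hy
    exact ⟨c₀ + d₀, c₁ + d₁, c₂ + d₂, by simp only [map_add]; ring⟩
  | mul x y _ _ hx hy =>
    obtain ⟨c₀, c₁, c₂, rfl⟩ := hx
    obtain ⟨d₀, d₁, d₂, rfl⟩ := hy
    refine ⟨c₀ * d₀ + a * (c₁ * d₂ + c₂ * d₁), c₀ * d₁ + c₁ * d₀ + a * (c₂ * d₂),
      c₀ * d₂ + c₁ * d₁ + c₂ * d₀, ?_⟩
    simp only [map_add, map_mul, ← hα]
    ring

lemma trace_mem_range {K L : Type*} [Field K] [Field L] [Algebra K L] {ζ a : K} {α : L}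
    (hζ : ζ ^ 2 + ζ + 1 = 0)
    (hα : α ^ 3 = algebraMap K L a) (hgen : Algebra.adjoin K {α} = ⊤)
    (σ : L ≃ₐ[K] L) (hσ : σ α = algebraMap K L ζ * α) (s : L) :
    s + σ s + σ (σ s) ∈ Set.range (algebraMap K L) := by
  obtain ⟨c₀, c₁, c₂, rfl⟩ := exists_coords hα hgen s
  have hz : (algebraMap K L ζ) ^ 2 + algebraMap K L ζ + 1 = 0 := by
    simpa using congrArg (algebraMap K L) hζ
  refine ⟨3 * c₀, ?_⟩
  simp only [map_add, map_mul, map_pow, hσ, AlgEquiv.commutes, map_ofNat]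
  generalize algebraMap K L ζ = z at *
  linear_combination (-(algebraMap K L c₁ * α)
    - algebraMap K L c₂ * α ^ 2 * (z ^ 2 - z + 1)) * hz

/-- The cubic of the theorem, with `uᵢ` in place of `σⁱ(u)`, as a combination of the cubes and the
product of the three eigenforms. -/
lemma cubic_eq_sum_cubes {L : Type*} [Field L] {z α a : L} (hz : z ^ 2 + z + 1 = 0)
    (hα : α ^ 3 = a) (u₀ u₁ u₂ l X Y Z : L) :
    (u₀ + u₁ + u₂ + l) * (a ^ 2 * X ^ 3 + a * Y ^ 3 + Z ^ 3)
        + 3 * (α * u₀ + z * α * u₁ + z ^ 2 * α * u₂)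
          * (a * X ^ 2 * Z + a * Y ^ 2 * X + Z ^ 2 * Y)
        + 3 * (α ^ 2 * u₀ + z ^ 2 * α ^ 2 * u₁ + z * α ^ 2 * u₂)
          * (a * X ^ 2 * Y + Y ^ 2 * Z + Z ^ 2 * X)
        + 3 * (2 * a * (u₀ + u₁ + u₂) - l * a) * (X * Y * Z)
      = u₀ * eigenForm α X Y Z ^ 3 + u₁ * eigenForm (z * α) X Y Z ^ 3
        + u₂ * eigenForm (z ^ 2 * α) X Y Z ^ 3
        + l * (eigenForm α X Y Z * eigenForm (z * α) X Y Z * eigenForm (z ^ 2 * α) X Y Z) := by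
  have cube (m : L) (hm : m ^ 3 = a) : eigenForm m X Y Z ^ 3
      = (a ^ 2 * X ^ 3 + a * Y ^ 3 + Z ^ 3)
        + 3 * m * (a * X ^ 2 * Z + a * Y ^ 2 * X + Z ^ 2 * Y)
        + 3 * m ^ 2 * (a * X ^ 2 * Y + Y ^ 2 * Z + Z ^ 2 * X) + 6 * a * (X * Y * Z) := by
    subst hm; unfold eigenForm; ring
  have hz3 : z ^ 3 = 1 := by linear_combination (z - 1) * hz
  have hz4 : z ^ 4 = z := by linear_combination z * hz3
  have prod : eigenForm α X Y Z * eigenForm (z * α) X Y Z * eigenForm (z ^ 2 * α) X Y Z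
      = a ^ 2 * X ^ 3 + a * Y ^ 3 + Z ^ 3 - 3 * a * (X * Y * Z) := by
    have hz2 : z ^ 2 = -z - 1 := by linear_combination hz
    subst hα
    simp only [eigenForm, mul_pow, ← pow_mul, Nat.reduceMul, hz2]
    grind
  rw [prod, cube α hα, cube (z * α) (by rw [mul_pow, hz3, hα, one_mul]),
    cube (z ^ 2 * α) (by rw [mul_pow, ← pow_mul, mul_comm 2 3, pow_mul, hz3, hα]; ring)]
  simp only [mul_pow, ← pow_mul, Nat.reduceMul, hz4]
  ring

/-- `ℓ_m ∘ M_S = m ℓ_m` for `m³ = a`. -/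
lemma eigenForm_MS {L : Type*} [Field L] {m a : L} (hm : m ^ 3 = a) (X Y Z : L) :
    eigenForm m Y Z (a * X) = m * eigenForm m X Y Z := by
  subst hm; unfold eigenForm; ring

/-- `ℓ_m ∘ M_T = z² β(m') ℓ_{m'}` for `m = z m'` and `m'³ = a`, where `β(T) = c₀ + c₁ T + c₂ T²`. -/
lemma eigenForm_MT {L : Type*} [Field L] {z m m' a : L} (hm : m' ^ 3 = a)
    (hmm : m = z * m') (c₀ c₁ c₂ X Y Z : L) :
    eigenForm m (c₀ * X + c₁ * Y + c₂ * Z) (z * (c₀ * Y + c₁ * Z + c₂ * (a * X)))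
        (z ^ 2 * (c₀ * Z + c₁ * (a * X) + c₂ * (a * Y)))
      = z ^ 2 * (c₀ + c₁ * m' + c₂ * m' ^ 2) * eigenForm m' X Y Z := by
  subst hm hmm; unfold eigenForm; ring

/-- For the pair `(a, b = N(β))` with `a` a non-cube, the Hesse-form cubic
`F` built from traces of `u = β/σ²(β)` has coefficients in `K` and is an eigenform,
with eigenvalue `a` for `M_S = M_{a,3}` and eigenvalue `b` for
`M_T = D₃(β₀ I + β₁ M_S + β₂ M_S²)`. -/
theorem stmt0 (K L : Type*) [Field K] [Field L] [Algebra K L]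
    (hchar : (3 : K) ≠ 0) (ζ : K) (hζ : IsPrimitiveRoot ζ 3)
    (a : K) (ha : a ≠ 0) (hnc : ¬∃ c : K, c ^ 3 = a)
    (α : L) (hα : α ^ 3 = algebraMap K L a)
    (hgen : Algebra.adjoin K {α} = ⊤)
    (σ : L ≃ₐ[K] L) (hσ : σ α = algebraMap K L ζ * α)
    (β : L) (hβ : β ≠ 0) (β₀ β₁ β₂ : K)
    (hβeq : β = algebraMap K L β₀ + algebraMap K L β₁ * α + algebraMap K L β₂ * α ^ 2)
    (lam : K) :
    let Tr : L → L := fun s => s + σ s + σ (σ s)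
    let u : L := β / σ (σ β)
    let b : L := β * σ β * σ (σ β)
    let a' : L := algebraMap K L a
    let lam' : L := algebraMap K L lam
    let F : L → L → L → L := fun X Y Z =>
      (Tr u + lam') * (a' ^ 2 * X ^ 3 + a' * Y ^ 3 + Z ^ 3)
        + 3 * Tr (α * u) * (a' * X ^ 2 * Z + a' * Y ^ 2 * X + Z ^ 2 * Y)
        + 3 * Tr (α ^ 2 * u) * (a' * X ^ 2 * Y + Y ^ 2 * Z + Z ^ 2 * X)
        + 3 * (2 * a' * Tr u - lam' * a') * (X * Y * Z)
    let MS : Matrix (Fin 3) (Fin 3) L := !![0, 1, 0; 0, 0, 1; a', 0, 0]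
    let D3 : Matrix (Fin 3) (Fin 3) L :=
      Matrix.diagonal ![1, algebraMap K L ζ, algebraMap K L ζ ^ 2]
    let MT : Matrix (Fin 3) (Fin 3) L :=
      D3 * (algebraMap K L β₀ • (1 : Matrix (Fin 3) (Fin 3) L)
        + algebraMap K L β₁ • MS + algebraMap K L β₂ • MS ^ 2)
    (Tr u + lam' ∈ Set.range (algebraMap K L)) ∧
    (Tr (α * u) ∈ Set.range (algebraMap K L)) ∧
    (Tr (α ^ 2 * u) ∈ Set.range (algebraMap K L)) ∧
    (2 * a' * Tr u - lam' * a' ∈ Set.range (algebraMap K L)) ∧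
    (∀ X Y Z : L,
      F (MS.mulVec ![X, Y, Z] 0) (MS.mulVec ![X, Y, Z] 1) (MS.mulVec ![X, Y, Z] 2)
        = a' * F X Y Z) ∧
    (∀ X Y Z : L,
      F (MT.mulVec ![X, Y, Z] 0) (MT.mulVec ![X, Y, Z] 1) (MT.mulVec ![X, Y, Z] 2)
        = b * F X Y Z) := by
  intro Tr u b a' lam' F MS D3 MT
  have hζ' : ζ ^ 2 + ζ + 1 = 0 := by
    have h := hζ.geom_sum_eq_zero (by norm_num)
    simp only [Finset.sum_range_succ, Finset.sum_range_zero] at h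
    linear_combination h
  have hTr (s : L) : Tr s ∈ Set.range (algebraMap K L) :=
    trace_mem_range hζ' hα hgen σ hσ s
  have hz : (algebraMap K L ζ) ^ 2 + algebraMap K L ζ + 1 = 0 := by
    simpa using congrArg (algebraMap K L) hζ'
  set z : L := algebraMap K L ζ with hzdef
  have hz3 : z ^ 3 = 1 := by linear_combination (z - 1) * hz
  have hσz : σ z = z := σ.commutes ζ
  have hσ2 : σ (σ α) = z ^ 2 * α := by rw [hσ, map_mul, hσz, hσ]; ring
  have hσ3 (s : L) : σ (σ (σ s)) = s := by
    obtain ⟨c₀, c₁, c₂, rfl⟩ := exists_coords hα hgen s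
    have h3 : σ (σ (σ α)) = α := by
      rw [hσ2, map_mul, map_pow, hσz, hσ]
      linear_combination α * hz3
    simp only [map_add, map_mul, map_pow, AlgEquiv.commutes, h3]
  have hα1 : (z * α) ^ 3 = a' := by rw [mul_pow, hz3, hα, one_mul]
  have hα2 : (z ^ 2 * α) ^ 3 = a' := by
    rw [mul_pow, ← pow_mul, mul_comm 2 3, pow_mul, hz3, hα]; ring
  have hF (X Y Z : L) : F X Y Z = u * eigenForm α X Y Z ^ 3
      + σ u * eigenForm (z * α) X Y Z ^ 3 + σ (σ u) * eigenForm (z ^ 2 * α) X Y Z ^ 3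
      + lam' * (eigenForm α X Y Z * eigenForm (z * α) X Y Z
        * eigenForm (z ^ 2 * α) X Y Z) := by
    rw [← cubic_eq_sum_cubes hz hα]
    have hz4 : z ^ 4 = z := by linear_combination z * hz3
    simp only [F, Tr, map_mul, map_pow, hσ, hσz, mul_pow, ← mul_assoc, ← pow_two, ← pow_mul]
    linear_combination (3 * α ^ 2 * σ (σ u) * (a' * X ^ 2 * Y + Y ^ 2 * Z + Z ^ 2 * X)) * hz4
  refine ⟨?_, hTr _, hTr _, ?_, ?_, ?_⟩
  · obtain ⟨t, ht⟩ := hTr u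
    exact ⟨t + lam, by rw [map_add, ht]⟩
  · obtain ⟨t, ht⟩ := hTr u
    exact ⟨2 * a * t - lam * a, by simp only [map_sub, map_mul, map_ofNat, ht, a', lam']⟩
  · intro X Y Z
    have e0 : MS.mulVec ![X, Y, Z] 0 = Y := by
      simp [MS, Matrix.mulVec, dotProduct, Fin.sum_univ_three]
    have e1 : MS.mulVec ![X, Y, Z] 1 = Z := by
      simp [MS, Matrix.mulVec, dotProduct, Fin.sum_univ_three]
    have e2 : MS.mulVec ![X, Y, Z] 2 = a' * X := by
      simp [MS, Matrix.mulVec, dotProduct, Fin.sum_univ_three]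
    rw [e0, e1, e2, hF, hF, eigenForm_MS hα, eigenForm_MS hα1, eigenForm_MS hα2]
    simp only [mul_pow _ (eigenForm _ _ _ _), hα, hα1, hα2]
    -- The product of the three eigenvalues is `ζ³ α³ = a`.
    linear_combination (lam' * (eigenForm α X Y Z * eigenForm (z * α) X Y Z
      * eigenForm (z ^ 2 * α) X Y Z)) * (α ^ 3 * hz3 + hα)
  · intro X Y Z
    have e0 : MT.mulVec ![X, Y, Z] 0 = algebraMap K L β₀ * X + algebraMap K L β₁ * Y
        + algebraMap K L β₂ * Z := by
      simp [MT, D3, MS, Matrix.mulVec, dotProduct, Fin.sum_univ_three, pow_two, Matrix.mul_apply,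
        Matrix.diagonal_apply]
      simp only [Algebra.smul_def]
    have e1 : MT.mulVec ![X, Y, Z] 1 = z * (algebraMap K L β₀ * Y + algebraMap K L β₁ * Z
        + algebraMap K L β₂ * (a' * X)) := by
      simp [MT, D3, MS, Matrix.mulVec, dotProduct, Fin.sum_univ_three, pow_two, Matrix.mul_apply,
        Matrix.diagonal_apply]
      simp only [Algebra.smul_def, hzdef]
      ring
    have e2 : MT.mulVec ![X, Y, Z] 2 = z ^ 2 * (algebraMap K L β₀ * Z
        + algebraMap K L β₁ * (a' * X) + algebraMap K L β₂ * (a' * Y)) := by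
      simp [MT, D3, MS, Matrix.mulVec, dotProduct, Fin.sum_univ_three, pow_two, Matrix.mul_apply,
        Matrix.diagonal_apply]
      simp only [Algebra.smul_def, hzdef]
      ring
    have hβ1 : σ β = algebraMap K L β₀ + algebraMap K L β₁ * (z * α)
        + algebraMap K L β₂ * (z * α) ^ 2 := by
      rw [hβeq]; simp only [map_add, map_mul, map_pow, AlgEquiv.commutes, hσ]
    have hβ2 : σ (σ β) = algebraMap K L β₀ + algebraMap K L β₁ * (z ^ 2 * α)
        + algebraMap K L β₂ * (z ^ 2 * α) ^ 2 := by
      rw [hβeq]; simp only [map_add, map_mul, map_pow, AlgEquiv.commutes, hσ2]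
    rw [e0, e1, e2, hF, hF,
      eigenForm_MT (m := α) hα2 (by linear_combination -α * hz3),
      eigenForm_MT (m := z * α) hα rfl,
      eigenForm_MT (m := z ^ 2 * α) hα1 (by ring), ← hβeq, ← hβ1, ← hβ2]
    have n1 : σ β ≠ 0 := by simpa using hβ
    have n2 : σ (σ β) ≠ 0 := by simpa using hβ
    have hz6 : (z ^ 2) ^ 3 = 1 := by rw [← pow_mul, mul_comm 2 3, pow_mul, hz3, one_pow]
    -- The relations `σⁱ(u) σⁱ⁺²(β)³ = b σⁱ⁺²(u)`.
    have k0 : u * σ (σ β) ^ 3 = b * σ (σ u) := by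
      simp only [u, b, map_div₀, hσ3]; field_simp
    have k1 : σ u * β ^ 3 = b * u := by
      simp only [u, b, map_div₀, hσ3]; field_simp
    have k2 : σ (σ u) * σ β ^ 3 = b * σ u := by
      simp only [u, b, map_div₀, hσ3]; field_simp
    simp only [mul_pow _ (eigenForm _ _ _ _), mul_pow (z ^ 2), hz6, one_mul]
    linear_combination eigenForm (z ^ 2 * α) X Y Z ^ 3 * k0 + eigenForm α X Y Z ^ 3 * k1
      + eigenForm (z * α) X Y Z ^ 3 * k2
      + (lam' * b * (eigenForm α X Y Z * eigenForm (z * α) X Y Z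
        * eigenForm (z ^ 2 * α) X Y Z)) * hz6
end

section
/- Let K be a field of characteristic different from 3 containing a primitive cube root of unity ζ, let b ∈ K, and let A = K[x]/(x³ − 1) with σ the unique K-algebra automorphism of A sending the class of x to ζ·x. Define β = (b+2)/3 + ((b−1)/3)·x + ((b−1)/3)·x² ∈ A. Then β·σ(β)·σ²(β) = b·1 in A. Moreover, if b ≠ 0 then β is a unit of A and, setting u = β·σ²(β)⁻¹, one has u + σ(u) + σ²(u) = ((b−1)²/b + 3)·1. -/
/-!
The element `e = (1 + x + x²)/3` is an idempotent of `A = K[x]/(x³ - 1)`, and its conjugates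
`e`, `σ e`, `σ² e` are orthogonal with sum `1`. Since `β = 1 + (b - 1) e`, the element `β` acts
as `b` on the `e`-component and as `1` on the two others, so its norm is
`1 + (b - 1)(e + σ e + σ² e) = b`. For `b ≠ 0` the inverse of `σ² β` is `1 + (b⁻¹ - 1) σ² e`,
hence `u = 1 + (b - 1) e + (b⁻¹ - 1) σ² e`, whose trace is
`3 + (b - 1) + (b⁻¹ - 1) = (b - 1)²/b + 3`.
-/

/-- in `A = K[x]/(x³-1)` with `σ(x) = ζx`, the element
`β = (b+2)/3 + ((b-1)/3)x + ((b-1)/3)x²` has norm `β·σ(β)·σ²(β) = b`; if `b ≠ 0` then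
`β` is a unit and `u = β·σ²(β)⁻¹` has trace `(b-1)²/b + 3`. -/
theorem stmt4 (K : Type*) [Field K] (hchar : (3 : K) ≠ 0)
    (ζ : K) (hζ : IsPrimitiveRoot ζ 3) (b : K)
    (σ : AdjoinRoot (Polynomial.X ^ 3 - 1 : Polynomial K) ≃ₐ[K]
      AdjoinRoot (Polynomial.X ^ 3 - 1 : Polynomial K))
    (hσ : σ (AdjoinRoot.root (Polynomial.X ^ 3 - 1 : Polynomial K))
      = algebraMap K (AdjoinRoot (Polynomial.X ^ 3 - 1 : Polynomial K)) ζ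
        * AdjoinRoot.root (Polynomial.X ^ 3 - 1 : Polynomial K)) :
    let A := AdjoinRoot (Polynomial.X ^ 3 - 1 : Polynomial K)
    let xx : A := AdjoinRoot.root (Polynomial.X ^ 3 - 1 : Polynomial K)
    let β : A := algebraMap K A ((b + 2) / 3) + algebraMap K A ((b - 1) / 3) * xx
      + algebraMap K A ((b - 1) / 3) * xx ^ 2
    β * σ β * σ (σ β) = algebraMap K A b ∧
    (b ≠ 0 → IsUnit β ∧
      ∀ γ : A, σ (σ β) * γ = 1 →
        β * γ + σ (β * γ) + σ (σ (β * γ))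
          = algebraMap K A ((b - 1) ^ 2 / b + 3)) := by
  intro A xx β
  have hx : xx ^ 3 = 1 := by
    have h := AdjoinRoot.eval₂_root (Polynomial.X ^ 3 - 1 : Polynomial K)
    simp only [Polynomial.eval₂_sub, Polynomial.eval₂_X_pow, Polynomial.eval₂_one] at h
    exact sub_eq_zero.mp h
  have hζ' : 1 + ζ + ζ ^ 2 = 0 := by
    have h := hζ.geom_sum_eq_zero (by norm_num)
    simpa [Finset.sum_range_succ] using h
  obtain ⟨z, hz⟩ : ∃ z : A, z = algebraMap K A ζ := ⟨_, rfl⟩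
  obtain ⟨t, ht⟩ : ∃ t : A, t = algebraMap K A 3⁻¹ := ⟨_, rfl⟩
  obtain ⟨c, hc⟩ : ∃ c : A, c = algebraMap K A (b - 1) := ⟨_, rfl⟩
  have hz0 : 1 + z + z ^ 2 = 0 := by
    rw [hz, ← map_pow, ← map_one (algebraMap K A), ← map_add, ← map_add, hζ', map_zero]
  have ht3 : 3 * t = 1 := by
    rw [ht, ← map_ofNat (algebraMap K A) 3, ← map_mul, mul_inv_cancel₀ hchar, map_one]
  have hσx : σ xx = z * xx := by rw [hz]; exact hσ
  have hσz : σ z = z := by rw [hz]; exact σ.commutes ζ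
  have hσt : σ t = t := by rw [ht]; exact σ.commutes _
  have hσc : σ c = c := by rw [hc]; exact σ.commutes _
  have hz3 : z ^ 3 = 1 := by linear_combination (z - 1) * hz0
  obtain ⟨e, he⟩ : ∃ e : A, e = t * (1 + xx + xx ^ 2) := ⟨_, rfl⟩
  obtain ⟨e₁, he₁⟩ : ∃ e₁ : A, e₁ = σ e := ⟨_, rfl⟩
  obtain ⟨e₂, he₂⟩ : ∃ e₂ : A, e₂ = σ e₁ := ⟨_, rfl⟩
  have he₁' : e₁ = t * (1 + z * xx + z ^ 2 * xx ^ 2) := by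
    rw [he₁, he]
    simp only [map_mul, map_add, map_pow, map_one, hσx, hσt]
    ring
  have he₂' : e₂ = t * (1 + z ^ 2 * xx + z * xx ^ 2) := by
    rw [he₂, he₁']
    simp only [map_mul, map_add, map_pow, map_one, hσx, hσt, hσz]
    linear_combination t * z * xx ^ 2 * hz3
  have he₃ : σ e₂ = e := by
    rw [he₂', he]
    simp only [map_mul, map_add, map_pow, map_one, hσx, hσt, hσz]
    linear_combination (t * xx + t * xx ^ 2) * hz3
  have hsum : e + e₁ + e₂ = 1 := by
    rw [he, he₁', he₂']
    linear_combination ht3 + (t * xx + t * xx ^ 2) * hz0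
  have h01 : e * e₁ = 0 := by
    rw [he, he₁']
    linear_combination t ^ 2 * (1 + xx + xx ^ 2) * hz0
      + t ^ 2 * (z + z ^ 2 + z ^ 2 * xx) * hx
  have h12 : e₁ * e₂ = 0 := by
    have h := congrArg σ h01
    rwa [map_mul, map_zero, ← he₁, ← he₂] at h
  have h20 : e₂ * e = 0 := by
    have h := congrArg σ h12
    rwa [map_mul, map_zero, ← he₂, he₃] at h
  have hee : e₂ * e₂ = e₂ := by linear_combination e₂ * hsum - h20 - h12
  have hβ : β = 1 + c * e := by
    have h1 : algebraMap K A ((b + 2) / 3) = 1 + c * t := by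
      rw [hc, ht, ← map_mul, ← map_one (algebraMap K A), ← map_add]
      congr 1
      field_simp
      ring
    have h2 : algebraMap K A ((b - 1) / 3) = c * t := by
      rw [hc, ht, ← map_mul, div_eq_mul_inv]
    simp only [β, h1, h2, he]
    ring
  have hβ₁ : σ β = 1 + c * e₁ := by
    rw [hβ, map_add, map_one, map_mul, hσc, ← he₁]
  have hβ₂ : σ (σ β) = 1 + c * e₂ := by
    rw [hβ₁, map_add, map_one, map_mul, hσc, ← he₂]
  have hbc : algebraMap K A b = 1 + c := by
    rw [hc, ← map_one (algebraMap K A), ← map_add]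
    congr 1
    ring
  have hnorm : β * σ β * σ (σ β) = algebraMap K A b := by
    rw [hβ₂, hβ₁, hβ, hbc]
    linear_combination c * hsum + (c ^ 2 + c ^ 3 * e₂) * h01 + c ^ 2 * h12 + c ^ 2 * h20
  refine ⟨hnorm, fun hb => ⟨?_, fun γ hγ => ?_⟩⟩
  · have hu : IsUnit (β * (σ β * σ (σ β))) := by
      rw [← mul_assoc, hnorm]
      exact (IsUnit.mk0 b hb).map (algebraMap K A)
    exact isUnit_of_mul_isUnit_left hu
  · obtain ⟨d, hd⟩ : ∃ d : A, d = algebraMap K A (b⁻¹ - 1) := ⟨_, rfl⟩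
    have hσd : σ d = d := by rw [hd]; exact σ.commutes _
    -- `(1 + c) (1 + d) = b * b⁻¹ = 1`
    have hcd : c + d + c * d = 0 := by
      rw [hc, hd, ← map_mul, ← map_add, ← map_add, ← map_zero (algebraMap K A)]
      congr 1
      field_simp
      ring
    have htr : algebraMap K A ((b - 1) ^ 2 / b + 3) = 3 + c + d := by
      rw [hc, hd, ← map_ofNat (algebraMap K A) 3, ← map_add, ← map_add]
      congr 1
      field_simp
      ring
    rw [hβ₂] at hγ
    have hγ' : γ = 1 + d * e₂ := by
      linear_combination (1 + d * e₂) * hγ - γ * e₂ * hcd - γ * c * d * hee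
    have hu : β * γ = 1 + c * e + d * e₂ := by
      rw [hβ, hγ']
      linear_combination c * d * h20
    have hu₁ : σ (β * γ) = 1 + c * e₁ + d * e := by
      rw [hu]
      simp only [map_add, map_mul, map_one, hσc, hσd, ← he₁, he₃]
    have hu₂ : σ (σ (β * γ)) = 1 + c * e₂ + d * e₁ := by
      rw [hu₁]
      simp only [map_add, map_mul, map_one, hσc, hσd, ← he₁, ← he₂]
    rw [hu₂, hu₁, hu, htr]
    linear_combination (c + d) * hsum
end

section
/- Let K be a field of characteristic different from 5 containing a primitive 5th root of unity ζ, and let λ ∈ K with λ ≠ 0 and (λ² + λ − 1)(λ⁴ − 3λ³ + 4λ² − 2λ + 1)(λ⁴ + 2λ³ + 4λ² + 3λ + 1) ≠ 0. Define the linear form H(x) = (λ¹⁰ − 14λ⁵ − 1)·x₀ − 5λ²(1 + 2λ⁵)·(x₁ + x₄) + 5λ³(λ⁵ − 2)·(x₂ + x₃). Then any nonzero x ∈ K⁵ satisfying q_i(x) = 0 for all i ∈ Z/5Z and H(x) = 0 is a scalar multiple of the origin O_E = (0, λ, −1, 1, −λ). (I.e., H is the hypertangent hyperplane at the origin: it meets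 the quintic curve E_λ only at O_E.) -/
/-!
Write `t = λ⁵` and `Δ = t² + 11 t - 1`, which is the product of the smoothness factors, and put
`a = x₀`, `s = x₁ + x₄`, `u = x₂ + x₃`.

The linear forms `a, s, u` are invariant under the inversion `xᵢ ↦ x₋ᵢ` of the curve, and they map
the curve two-to-one onto the conic
`G = a u - λ s² + 2 λ² a² + λ³ u² + λ⁴ a s - λ² s u = 0`.
The line `H = 0` is tangent to this conic at the point
`(a : s : u) = (5 λ³ : -λ (3 + t) : 1 - 3 t)`, so, modulo `H` and up to units, `G` is the square of
any other linear form vanishing at that point (`conic_tangent`). Hence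
`(a, s, u) = (5 λ³ k, -λ (3 + t) k, (1 - 3 t) k)` for some `k`.

On the remaining space, with coordinates `k, x₁, x₂`, put `n = (1 + 2 t) k` and
`L = x₁ + λ x₂ + λ n`; this form vanishes to order two at the origin. The quadrics then give
`(x₂ - n) L = λ Δ k²`, `k L = 0` and `L² = c k L`, whence `L = 0` and `k = 0`
(`tangent_parameter_eq_zero`). So `x` is anti-invariant, and the quadrics make it a multiple of
the origin.
-/

/-- Tangency of the line `H = 0` to the conic `G = 0`: the two conclusions are two linear forms
cutting out the point of contact. Each arises by eliminating `s`, resp. `u`, between the line and the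
conic, which leaves a unit multiple of its square. -/
theorem conic_tangent {K : Type*} [Field K] {l a s u : K} (hl : l ≠ 0)
    (hD : l ^ 10 + 11 * l ^ 5 - 1 ≠ 0)
    (hG : a * u - l * s ^ 2 + 2 * l ^ 2 * a ^ 2 + l ^ 3 * u ^ 2 + l ^ 4 * a * s
      - l ^ 2 * s * u = 0)
    (hH : (l ^ 10 - 14 * l ^ 5 - 1) * a - 5 * l ^ 2 * (1 + 2 * l ^ 5) * s
      + 5 * l ^ 3 * (l ^ 5 - 2) * u = 0) :
    (3 * l ^ 5 - 1) * a + 5 * l ^ 3 * u = 0 ∧ 5 * l ^ 2 * s + (3 + l ^ 5) * a = 0 := by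
  -- `A, B, C` are the coefficients of `H` at `a, s, u`.
  obtain ⟨A, hA⟩ : ∃ A, A = l ^ 10 - 14 * l ^ 5 - 1 := ⟨_, rfl⟩
  obtain ⟨B, hB⟩ : ∃ B, B = -(5 * l ^ 2 * (1 + 2 * l ^ 5)) := ⟨_, rfl⟩
  obtain ⟨C, hC⟩ : ∃ C, C = 5 * l ^ 3 * (l ^ 5 - 2) := ⟨_, rfl⟩
  constructor
  · have h : (l * (l ^ 10 + 11 * l ^ 5 - 1)) * ((3 * l ^ 5 - 1) * a + 5 * l ^ 3 * u) ^ 2 = 0 := by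
      have key : (l * (l ^ 10 + 11 * l ^ 5 - 1)) * ((3 * l ^ 5 - 1) * a + 5 * l ^ 3 * u) ^ 2
          = B ^ 2 * (a * u - l * s ^ 2 + 2 * l ^ 2 * a ^ 2 + l ^ 3 * u ^ 2 + l ^ 4 * a * s
              - l ^ 2 * s * u)
            - (A * a + B * s + C * u)
              * (-l * B * s + B * (l ^ 4 * a - l ^ 2 * u) + l * (A * a + C * u)) := by
        subst hA hB hC
        ring
      have hH' : A * a + B * s + C * u = 0 := by
        subst hA hB hC
        linear_combination hH
      rw [key, hG, hH']
      ring
    exact pow_eq_zero_iff two_ne_zero |>.1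
      ((mul_eq_zero.1 h).resolve_left (mul_ne_zero hl hD))
  · have h : (l ^ 3 * (l ^ 10 + 11 * l ^ 5 - 1)) * (5 * l ^ 2 * s + (3 + l ^ 5) * a) ^ 2 = 0 := by
      have key : (l ^ 3 * (l ^ 10 + 11 * l ^ 5 - 1)) * (5 * l ^ 2 * s + (3 + l ^ 5) * a) ^ 2
          = C ^ 2 * (a * u - l * s ^ 2 + 2 * l ^ 2 * a ^ 2 + l ^ 3 * u ^ 2 + l ^ 4 * a * s
              - l ^ 2 * s * u)
            - (A * a + B * s + C * u)
              * (l ^ 3 * C * u + C * (a - l ^ 2 * s) - l ^ 3 * (A * a + B * s)) := by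
        subst hA hB hC
        ring
      have hH' : A * a + B * s + C * u = 0 := by
        subst hA hB hC
        linear_combination hH
      rw [key, hG, hH']
      ring
    exact pow_eq_zero_iff two_ne_zero |>.1
      ((mul_eq_zero.1 h).resolve_left (mul_ne_zero (pow_ne_zero 3 hl) hD))

/-- Over the point of contact, with `a = 5 λ³ k`, `s = -λ (3 + t) k`, `u = (1 - 3 t) k`, the
quadrics `q₀, …, q₃` force `k = 0`; here `y = x₁`, `z = x₂`, `v = x₃ = u - z` and
`w = x₄ = s - y`. -/
theorem tangent_parameter_eq_zero {K : Type*} [Field K] (h5 : (5 : K) ≠ 0) {l k y z a v w : K}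
    (hl : l ≠ 0) (hD : l ^ 10 + 11 * l ^ 5 - 1 ≠ 0)
    (ha : a = 5 * l ^ 3 * k) (hv : v = (1 - 3 * l ^ 5) * k - z)
    (hw : w = -(l * (3 + l ^ 5)) * k - y)
    (h0 : l * a ^ 2 + l ^ 2 * v * z - w * y = 0)
    (h1 : l * y ^ 2 + l ^ 2 * w * v - a * z = 0)
    (h2 : l * z ^ 2 + l ^ 2 * a * w - y * v = 0)
    (h3 : l * v ^ 2 + l ^ 2 * y * a - z * w = 0) : k = 0 := by
  subst ha hv hw
  obtain ⟨L, hL⟩ : ∃ L, L = y + l * z + l * ((1 + 2 * l ^ 5) * k) := ⟨_, rfl⟩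
  obtain rfl : y = L - l * z - l * ((1 + 2 * l ^ 5) * k) := by rw [hL]; ring
  have e7 : (1 + 7 * l ^ 5) * (k * L) = 0 := by linear_combination h3 - h2
  have e4 : l ^ 2 * ((4 * l ^ 5 - 3) * (k * L)) = 0 := by
    linear_combination h1 + l ^ 2 * h2 - l * (h0 + 2 * l * h2)
  have e4' := (mul_eq_zero.1 e4).resolve_left (pow_ne_zero 2 hl)
  -- The coefficients satisfy `4 (1 + 7 t) - 7 (4 t - 3) = 25`.
  have e25 : (5 : K) ^ 2 * (k * L) = 0 := by linear_combination 4 * e7 - 7 * e4'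
  have hkL := (mul_eq_zero.1 e25).resolve_left (pow_ne_zero 2 h5)
  have hL2 : L ^ 2 = 0 := by
    linear_combination h0 + 2 * l * h2 + (4 * l * (1 + 2 * l ^ 5) - l * (3 + l ^ 5)) * hkL
  have hL0 : L = 0 := pow_eq_zero_iff two_ne_zero |>.1 hL2
  subst hL0
  have hk : (l * (l ^ 10 + 11 * l ^ 5 - 1)) * k ^ 2 = 0 := by linear_combination -h2
  exact pow_eq_zero_iff two_ne_zero |>.1
    ((mul_eq_zero.1 hk).resolve_left (mul_ne_zero hl hD))

/-- the hypertangent hyperplane `H` at the origin of the elliptic normal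
quintic `E_λ ⊂ P⁴` meets the curve only at the origin `O_E = (0 : λ : -1 : 1 : -λ)`. -/
theorem stmt5 (K : Type*) [Field K] (hchar : (5 : K) ≠ 0)
    (ζ : K) (hζ : IsPrimitiveRoot ζ 5)
    (lam : K) (hlam : lam ≠ 0)
    (hsm : (lam ^ 2 + lam - 1) * (lam ^ 4 - 3 * lam ^ 3 + 4 * lam ^ 2 - 2 * lam + 1)
      * (lam ^ 4 + 2 * lam ^ 3 + 4 * lam ^ 2 + 3 * lam + 1) ≠ 0)
    (x : ZMod 5 → K) (hx : x ≠ 0)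
    (hq : ∀ i : ZMod 5,
      lam * x i ^ 2 + lam ^ 2 * x (i - 2) * x (i + 2) - x (i - 1) * x (i + 1) = 0)
    (hH : (lam ^ 10 - 14 * lam ^ 5 - 1) * x 0
      - 5 * lam ^ 2 * (1 + 2 * lam ^ 5) * (x 1 + x 4)
      + 5 * lam ^ 3 * (lam ^ 5 - 2) * (x 2 + x 3) = 0) :
    ∃ c : K, x 0 = 0 ∧ x 1 = c * lam ∧ x 2 = -c ∧ x 3 = c ∧ x 4 = -(c * lam) := by
  have hD : lam ^ 10 + 11 * lam ^ 5 - 1 ≠ 0 := by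
    intro h
    apply hsm
    linear_combination h
  have h0 : lam * x 0 ^ 2 + lam ^ 2 * x 3 * x 2 - x 4 * x 1 = 0 := hq 0
  have h1 : lam * x 1 ^ 2 + lam ^ 2 * x 4 * x 3 - x 0 * x 2 = 0 := hq 1
  have h2 : lam * x 2 ^ 2 + lam ^ 2 * x 0 * x 4 - x 1 * x 3 = 0 := hq 2
  have h3 : lam * x 3 ^ 2 + lam ^ 2 * x 1 * x 0 - x 2 * x 4 = 0 := hq 3
  have h4 : lam * x 4 ^ 2 + lam ^ 2 * x 2 * x 1 - x 3 * x 0 = 0 := hq 4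
  obtain ⟨hu, hs⟩ := conic_tangent (a := x 0) (s := x 1 + x 4) (u := x 2 + x 3) hlam hD
    (by linear_combination 2 * lam * h0 - h1 - h4 + lam ^ 2 * (h2 + h3)) hH
  have h53 : 5 * lam ^ 3 ≠ 0 := mul_ne_zero hchar (pow_ne_zero 3 hlam)
  have h52 : 5 * lam ^ 2 ≠ 0 := mul_ne_zero hchar (pow_ne_zero 2 hlam)
  obtain ⟨k, hk⟩ : ∃ k, x 0 = 5 * lam ^ 3 * k := ⟨x 0 / (5 * lam ^ 3), by field_simp⟩
  have hu' : x 3 = (1 - 3 * lam ^ 5) * k - x 2 := by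
    apply mul_left_cancel₀ h53
    linear_combination hu - (3 * lam ^ 5 - 1) * hk
  have hs' : x 4 = -(lam * (3 + lam ^ 5)) * k - x 1 := by
    apply mul_left_cancel₀ h52
    linear_combination hs - (3 + lam ^ 5) * hk
  have hk0 := tangent_parameter_eq_zero hchar hlam hD hk hu' hs' h0 h1 h2 h3
  have hx0 : x 0 = 0 := by rw [hk, hk0, mul_zero]
  have hx3 : x 3 = -x 2 := by rw [hu', hk0]; ring
  have hx4 : x 4 = -x 1 := by rw [hs', hk0]; ring
  rw [hx0, hx3, hx4] at h0 h2
  -- `q₀` and `q₂` now show that `x₁ + λ x₂` squares to zero.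
  have hx1 : x 1 + lam * x 2 = 0 := by
    have : (x 1 + lam * x 2) ^ 2 = 0 := by linear_combination h0 + 2 * lam * h2
    exact pow_eq_zero_iff two_ne_zero |>.1 this
  refine ⟨x 3, hx0, ?_, ?_, rfl, ?_⟩
  · rw [hx3]; linear_combination hx1
  · rw [hx3, neg_neg]
  · rw [hx3, hx4]; linear_combination -hx1
end

section
/- Let K be a field containing a primitive 5th root of unity ζ, let a ∈ K be nonzero, let L be a field extension of K containing α with α⁵ = a, and let β₀, ..., β₄ ∈ K. For j = 0, ..., 4 set β⁽ʲ⁾ = Σ_{k=0}^{4} β_k (αζʲ)ᵏ, and let v_j = (1, αζʲ, (αζʲ)², (αζʲ)³, (αζʲ)⁴)ᵀ and M = [v₀ | v₁ | v₂ | v₃ | v₄] ∈ M₅(L). Set M_S = M_{a,5} and M_T = D₅·(Σ_{k=0}^{4} β_k M_Sᵏ). Then M is invertible, M_S·M = M·(α·D₅), and M_T·M = M·M_{1,5}⁻¹·diag(β⁽⁰⁾, β⁽¹⁾, β⁽²⁾, β⁽³⁾, β⁽⁴⁾). In particular M_S·v_j = αζʲ·v_j for each j, i.e. the v_j are eigenvectors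 of M_S. -/
/-!
Put `c j = α ζʲ`. These are five distinct fifth roots of `a`, so `M` is the transpose of the
Vandermonde matrix of `c`, hence invertible, and `M_S v_j = c j • v_j` because `M_S` shifts the
powers of `c j` and `(c j)⁵ = a`. In matrix form `M_S M = M diag(c)`, so every polynomial in `M_S`
satisfies `p(M_S) M = M diag(p(c j))`. Finally `D₅ v_j = v_{j+1}`, with indices mod 5 since `ζ⁵ = 1`;
this says `D₅ M = M M_{1,5}⁻¹`, and the formula for `M_T` follows.
-/

/-- the matrix `M = [v₀|…|v₄]` of eigenvectors `v_j = (1, αζʲ, …, (αζʲ)⁴)`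
is invertible and conjugates `M_S` to `α·D₅` and `M_T` to `M_{1,5}⁻¹·diag(β⁽⁰⁾,…,β⁽⁴⁾)`;
in particular `M_S v_j = αζʲ v_j`. -/
theorem stmt9 (K : Type*) [Field K] (ζ : K) (hζ : IsPrimitiveRoot ζ 5)
    (a : K) (ha : a ≠ 0)
    (L : Type*) [Field L] [Algebra K L] (α : L) (hα : α ^ 5 = algebraMap K L a)
    (β : Fin 5 → K) :
    let ζ' : L := algebraMap K L ζ
    let v : Fin 5 → Fin 5 → L := fun j i => (α * ζ' ^ (j : ℕ)) ^ (i : ℕ)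
    let M : Matrix (Fin 5) (Fin 5) L := Matrix.of fun i j => v j i
    let MS : Matrix (Fin 5) (Fin 5) L :=
      Matrix.of fun i j => if j = i + 1 then (if i = 4 then algebraMap K L a else 1) else 0
    let D5 : Matrix (Fin 5) (Fin 5) L := Matrix.diagonal fun i => ζ' ^ (i : ℕ)
    let MT : Matrix (Fin 5) (Fin 5) L :=
      D5 * ∑ k : Fin 5, algebraMap K L (β k) • MS ^ (k : ℕ)
    let M15 : Matrix (Fin 5) (Fin 5) L := Matrix.of fun i j => if j = i + 1 then 1 else 0
    let βv : Fin 5 → L := fun j =>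
      ∑ k : Fin 5, algebraMap K L (β k) * (α * ζ' ^ (j : ℕ)) ^ (k : ℕ)
    IsUnit M ∧
    MS * M = M * (α • D5) ∧
    MT * M = M * (M15⁻¹ * Matrix.diagonal βv) ∧
    ∀ j : Fin 5, MS.mulVec (v j) = (α * ζ' ^ (j : ℕ)) • v j := by
  intro ζ' v M MS D5 MT M15 βv
  have hζ' : IsPrimitiveRoot ζ' 5 := hζ.map_of_injective (algebraMap K L).injective
  have hζ5 : ζ' ^ 5 = 1 := hζ'.pow_eq_one
  have hα0 : α ≠ 0 := by
    rintro rfl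
    rw [zero_pow (by norm_num)] at hα
    exact ha ((map_eq_zero (algebraMap K L)).1 hα.symm)
  set c : Fin 5 → L := fun j => α * ζ' ^ (j : ℕ) with hc
  have hc5 : ∀ j, c j ^ 5 = algebraMap K L a := by
    intro j
    rw [hc]
    simp only
    rw [mul_pow, ← pow_mul, mul_comm (j : ℕ) 5, pow_mul, hζ5, one_pow, mul_one, hα]
  have hinj : Function.Injective c := fun i j h =>
    Fin.ext (hζ'.pow_inj i.2 j.2 (mul_left_cancel₀ hα0 h))
  have hunit : IsUnit M := by
    have hM : M = (Matrix.vandermonde c).transpose := rfl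
    rw [hM, Matrix.isUnit_iff_isUnit_det, Matrix.det_transpose, isUnit_iff_ne_zero]
    exact Matrix.det_vandermonde_ne_zero_iff.2 hinj
  have heig : ∀ j : Fin 5, MS.mulVec (v j) = c j • v j := by
    intro j
    ext i
    have hv : ∀ i, v j i = c j ^ (i : ℕ) := fun _ => rfl
    have hsum : MS.mulVec (v j) i
        = (if i = 4 then algebraMap K L a else 1) * c j ^ ((i + 1 : Fin 5) : ℕ) := by
      simp [Matrix.mulVec, dotProduct, MS, hv]
    rw [hsum, Pi.smul_apply, smul_eq_mul, hv, ← pow_succ', ← hc5 j]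
    fin_cases i <;> simp
  have hdiag : MS * M = M * Matrix.diagonal c := by
    ext i j
    rw [Matrix.mul_diagonal, mul_comm]
    exact congrFun (heig j) i
  have hpow : ∀ k : ℕ, MS ^ k * M = M * Matrix.diagonal (fun j => c j ^ k) := by
    intro k
    induction k with
    | zero => simp
    | succ k ih =>
      rw [pow_succ', mul_assoc, ih, ← mul_assoc, hdiag, mul_assoc, Matrix.diagonal_mul_diagonal]
      simp only [pow_succ']
  have hpoly : (∑ k : Fin 5, algebraMap K L (β k) • MS ^ (k : ℕ)) * M
      = M * Matrix.diagonal βv := by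
    ext i j
    rw [Finset.sum_mul, Matrix.mul_diagonal, Matrix.sum_apply, Finset.mul_sum]
    refine Finset.sum_congr rfl fun k _ => ?_
    rw [smul_mul_assoc, hpow, Matrix.smul_apply, Matrix.mul_diagonal, smul_eq_mul]
    exact mul_left_comm _ _ _
  -- `M_{1,5}` is a permutation matrix, so its inverse is its transpose.
  have hinv : M15⁻¹ = Matrix.of fun i j => if i = j + 1 then 1 else 0 := by
    apply Matrix.inv_eq_right_inv
    ext i j
    simp [Matrix.mul_apply, M15, Matrix.one_apply, eq_comm]
  have hshift : D5 * M = M * M15⁻¹ := by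
    ext i j
    have hcs : ζ' * c j = c (j + 1) := by
      fin_cases j <;> simp [hc]
      · ring
      · ring
      · ring
      · ring
      · linear_combination α * hζ5
    have hr : (M * M15⁻¹) i j = c (j + 1) ^ (i : ℕ) := by
      rw [hinv]
      simp [Matrix.mul_apply, M, v, hc]
    rw [hr, ← hcs, mul_pow, Matrix.diagonal_mul]
    rfl
  refine ⟨hunit, ?_, ?_, heig⟩
  · rw [hdiag, ← Matrix.diagonal_smul]
    rfl
  · rw [← mul_assoc, ← hshift, mul_assoc, mul_assoc, hpoly]
end

section
/- Let K be a field of characteristic different from 5 containing a primitive 5th root of unity ζ, and let a ∈ K be nonzero and not a fifth power in K. Let M_S = M_{a,5}. Then for any nonzero quadratic form Q in the variables x₀, ..., x₄ with coefficients in K, the five quadratic forms Q, Q∘M_S, Q∘M_S², Q∘M_S³, Q∘M_S⁴ are linearly independent over K. -/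
/-!
The substitution `x ↦ M_S x` is an algebra endomorphism of `K[x₀, …, x₄]` whose fifth power scales
every variable by `a`, so it multiplies quadratic forms by `a²` (`shift_pow_five`). As `a` is not a
fifth power, neither is `a²`, since `a² = c⁵` gives `a = (a / c²)⁵`; hence `X⁵ - a²` is irreducible
over `K`. A nontrivial relation among the translates of `Q` is a nonzero polynomial of degree less
than `5` in the endomorphism that kills `Q`. It is coprime to `X⁵ - a²`, which kills `Q` as well, so
`Q = 0`.
-/

open MvPolynomial in
/-- The endomorphism `Q ↦ Q ∘ M_{a,5}` of the polynomial ring in five variables. -/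
noncomputable def shift {K : Type*} [Field K] (a : K) :
    MvPolynomial (Fin 5) K →ₐ[K] MvPolynomial (Fin 5) K :=
  aeval (fun i : Fin 5 => if i = 4 then C a * X 0 else X (i + 1))

open MvPolynomial in
lemma aeval_scale {K : Type*} [Field K] (a : K) {n : ℕ}
    (Q : MvPolynomial (Fin 5) K) (hQ : Q.IsHomogeneous n) :
    aeval (fun i : Fin 5 => C a * (X i : MvPolynomial (Fin 5) K)) Q = C (a ^ n) * Q := by
  conv_rhs => rw [Q.as_sum]
  conv_lhs => rw [Q.as_sum]
  rw [map_sum, Finset.mul_sum]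
  refine Finset.sum_congr rfl fun d hd => ?_
  have hdeg : d.degree = n := by
    rw [← hQ (mem_support_iff.mp hd), Finsupp.degree_eq_weight_one]
    rfl
  rw [aeval_monomial, monomial_eq (s := d)]
  simp only [mul_pow, Finsupp.prod_mul, algebraMap_eq]
  have h : (d.prod fun _ k => (C a : MvPolynomial (Fin 5) K) ^ k) = C (a ^ n) := by
    rw [Finsupp.prod, Finset.prod_pow_eq_pow_sum, ← hdeg, map_pow]
    rfl
  rw [h]
  ring

open MvPolynomial in
lemma shift_pow_five {K : Type*} [Field K] (a : K)
    (Q : MvPolynomial (Fin 5) K) (hQ : Q.IsHomogeneous 2) :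
    ((shift a).toLinearMap ^ 5) Q = a ^ 2 • Q := by
  have h : (shift a).comp ((shift a).comp ((shift a).comp ((shift a).comp (shift a)))) =
      aeval (fun i : Fin 5 => C a * (X i : MvPolynomial (Fin 5) K)) := by
    apply algHom_ext
    intro i
    fin_cases i <;> simp [shift]
  rw [smul_eq_C_mul, ← aeval_scale a Q hQ, ← h]
  rfl

open Polynomial in
/-- If `f ^ 5` acts on `v ≠ 0` by a scalar which is not a fifth power, the vectors `f ^ i v` with
`i < 5` are linearly independent. -/
lemma linearIndependent_of_pow_five {K V : Type*} [Field K] [AddCommGroup V] [Module K V]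
    (f : Module.End K V) (v : V) (hv : v ≠ 0) (b : K) (hb : ∀ c : K, c ^ 5 ≠ b)
    (hf : (f ^ 5) v = b • v) : LinearIndependent K (fun i : Fin 5 => (f ^ (i : ℕ)) v) := by
  have hirr : Irreducible (X ^ 5 - C b : K[X]) :=
    X_pow_sub_C_irreducible_of_prime Nat.prime_five hb
  rw [Fintype.linearIndependent_iff]
  intro g hg
  set p : K[X] := ∑ i : Fin 5, C (g i) * X ^ (i : ℕ) with hp
  have hpv : aeval f p v = 0 := by
    rw [← hg, hp]
    simp [map_sum, LinearMap.sum_apply, Module.End.mul_apply]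
  have hqv : aeval f (X ^ 5 - C b : K[X]) v = 0 := by
    simp [hf]
  have hdeg : p.degree < 5 := degree_sum_fin_lt g
  have hp0 : p = 0 := by
    by_contra hne
    have hcop : IsCoprime (X ^ 5 - C b : K[X]) p := by
      refine (hirr.coprime_iff_not_dvd).2 fun hdvd => ?_
      have := degree_le_of_dvd hdvd hne
      rw [degree_X_pow_sub_C (by norm_num)] at this
      exact absurd hdeg (not_lt.mpr this)
    obtain ⟨r, s, hrs⟩ := hcop
    apply hv
    have := congrArg (fun q => aeval f q v) hrs
    simpa only [map_add, map_mul, LinearMap.add_apply, Module.End.mul_apply, hpv, hqv, map_zero,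
      add_zero, map_one, Module.End.one_apply, eq_comm] using this
  intro i
  have := congrArg (fun q => q.coeff (i : ℕ)) hp0
  simpa [hp, finsetSum_coeff, coeff_C_mul, coeff_X_pow, Fin.val_inj] using this

open MvPolynomial in
/-- if `a` is not a fifth power in `K`, then for any nonzero quadratic
form `Q` in five variables over `K`, the translates `Q, Q∘M_S, …, Q∘M_S⁴` under
`M_S = M_{a,5}` are linearly independent over `K`. -/
theorem stmt10 (K : Type*) [Field K] (hchar : (5 : K) ≠ 0)
    (ζ : K) (hζ : IsPrimitiveRoot ζ 5)
    (a : K) (ha : a ≠ 0) (hnp : ¬∃ c : K, c ^ 5 = a)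
    (Q : MvPolynomial (Fin 5) K) (hQ2 : Q.IsHomogeneous 2) (hQ0 : Q ≠ 0) :
    let T : MvPolynomial (Fin 5) K → MvPolynomial (Fin 5) K := fun p =>
      aeval (fun i : Fin 5 => if i = 4 then C a * X 0 else X (i + 1)) p
    LinearIndependent K (fun i : Fin 5 => T^[(i : ℕ)] Q) := by
  intro T
  have hb : ∀ c : K, c ^ 5 ≠ a ^ 2 := by
    intro c hc
    have hc0 : c ≠ 0 := by
      rintro rfl
      exact ha (by simpa using hc.symm)
    refine hnp ⟨a / c ^ 2, ?_⟩
    rw [div_pow, show (c ^ 2) ^ 5 = (c ^ 5) ^ 2 by ring, hc]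
    field_simp
  have h := linearIndependent_of_pow_five (shift a).toLinearMap Q hQ0 (a ^ 2) hb
    (shift_pow_five a Q hQ2)
  have e : (fun i : Fin 5 => T^[(i : ℕ)] Q) =
      fun i : Fin 5 => ((shift a).toLinearMap ^ (i : ℕ)) Q := by
    funext i
    rw [Module.End.pow_apply]
    rfl
  rw [e]
  exact h
end

section
/- Let K be a field of characteristic different from 5 containing a primitive 5th root of unity ζ, let a ∈ K be nonzero and not a fifth power, let L = K(α) with α⁵ = a, and let σ be the generator of Gal(L/K) with σ(α) = ζα. For j = 0, ..., 4 let v_j = (1, αζʲ, (αζʲ)², (αζʲ)³, (αζʲ)⁴) ∈ L⁵, and let M_S = M_{a,5}. Let Q₀ be a quadratic form in x₀, ..., x₄ with coefficients in K such that Q₀(v₀) ≠ 0, and let W be the K-span of {Q₀∘M_Sⁱ : i = 0, ..., 4}. Then there exists Q ∈ W with Q(v₀) = Q(v₁) ≠ 0; for any such Q, the forms Q, Q∘M_S, ..., Q∘M_S⁴ form a K-basis of W; and if Q, Q' ∈ W both satisfy this normalization, then Q' = c·Q for some c ∈ K×. -/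
/-!
Write `β = α²` and let `e` be evaluation at `v₀`. Since `M_S v₀ = α v₀`, a quadratic form `Q`
satisfies `e (Q ∘ M_S) = β * e Q`. As `a²` is not a fifth power either, `1, β, …, β⁴` is a
`K`-basis of `L` (`exists_basis_sq`), so `e` maps the translates of any form with `e Q ≠ 0` to a
`K`-basis of `L`. In particular `e` restricts to an isomorphism `W ≃ L`.

Moreover `Q(v₁) = σ (Q(v₀))`, and the elements of `L` fixed by `σ` are those of `K`
(`mem_range_of_fixed`), so the normalization `Q(v₀) = Q(v₁) ≠ 0` says `e Q ∈ Kˣ`. This gives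
existence (take the preimage of `1`) and uniqueness up to scalars. Finally `Q ∘ M_S⁵ = a² Q` on
quadratic forms, so `W` is stable under `M_S`, and the five independent translates of a normalized
`Q` span it for dimension reasons.
-/

open MvPolynomial in
lemma aeval_mul_of_isHomogeneous {K A ι : Type*} [CommSemiring K] [CommSemiring A] [Algebra K A]
    {p : MvPolynomial ι K} {n : ℕ} (hp : p.IsHomogeneous n) (c : A) (g : ι → A) :
    aeval (fun i => c * g i) p = c ^ n * aeval g p := by
  simp only [aeval_def, eval₂_eq, Finset.mul_sum]
  refine Finset.sum_congr rfl fun d hd => ?_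
  have hdeg : ∑ i ∈ d.support, d i = n := by
    have := hp (mem_support_iff.mp hd)
    simpa [Finsupp.weight_apply, Finsupp.sum] using this
  simp only [mul_pow, Finset.prod_mul_distrib, Finset.prod_pow_eq_pow_sum, hdeg]
  ring

/-- The powers of `α²` form a basis of `L = K(α)`: `a²` is not a fifth power because
`a² = c⁵` would give `a = (c³ / a)⁵`, and `α = a⁻¹ (α²)³`. -/
lemma exists_basis_sq {K L : Type*} [Field K] [Field L] [Algebra K L] {a : K} (ha : a ≠ 0)
    (hnp : ¬∃ c : K, c ^ 5 = a) {α : L} (hα : α ^ 5 = algebraMap K L a)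
    (hgen : Algebra.adjoin K {α} = ⊤) :
    ∃ b : Module.Basis (Fin 5) K L, ∀ i, b i = (α ^ 2) ^ (i : ℕ) := by
  have hirr : Irreducible (Polynomial.X ^ 5 - Polynomial.C (a ^ 2)) := by
    refine X_pow_sub_C_irreducible_of_prime (by norm_num) fun c hc => hnp ⟨c ^ 3 / a, ?_⟩
    rw [div_pow, div_eq_iff (pow_ne_zero _ ha)]
    calc (c ^ 3) ^ 5 = (c ^ 5) ^ 3 := by ring
      _ = a * a ^ 5 := by rw [hc]; ring
  have hmonic : (Polynomial.X ^ 5 - Polynomial.C (a ^ 2)).Monic :=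
    Polynomial.monic_X_pow_sub_C _ (by norm_num)
  have hroot : Polynomial.aeval (α ^ 2) (Polynomial.X ^ 5 - Polynomial.C (a ^ 2)) = 0 := by
    simp only [map_sub, map_pow, Polynomial.aeval_X, Polynomial.aeval_C, ← hα]
    ring
  have hint : IsIntegral K (α ^ 2) := ⟨_, hmonic, hroot⟩
  have hdeg : (minpoly K (α ^ 2)).natDegree = 5 := by
    rw [← minpoly.eq_of_irreducible_of_monic hirr hroot hmonic, Polynomial.natDegree_X_pow_sub_C]
  have htop : Algebra.adjoin K {α ^ 2} = ⊤ := by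
    rw [eq_top_iff, ← hgen]
    refine Algebra.adjoin_le (Set.singleton_subset_iff.mpr ?_)
    have hmem : a⁻¹ • (α ^ 2) ^ 3 ∈ Algebra.adjoin K {α ^ 2} :=
      Subalgebra.smul_mem _ (pow_mem (Algebra.self_mem_adjoin_singleton K _) 3) _
    have heq : a⁻¹ • (α ^ 2) ^ 3 = α := by
      rw [show (α ^ 2) ^ 3 = α ^ 5 * α by ring, hα, ← Algebra.smul_def, inv_smul_smul₀ ha]
    rwa [heq] at hmem
  refine ⟨(PowerBasis.ofAdjoinEqTop hint htop).basis.reindex (finCongr hdeg), fun i => ?_⟩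
  rw [Module.Basis.reindex_apply, PowerBasis.basis_eq_pow]
  simp only [PowerBasis.ofAdjoinEqTop_gen]
  rfl

/-- The fixed field of `σ` is `K`: each basis vector `β ^ i` is an eigenvector of `σ` with
eigenvalue `ζ ^ (2 * i)`, which is `1` only for `i = 0`. -/
lemma mem_range_of_fixed {K L : Type*} [Field K] [Field L] [Algebra K L] {ζ : K}
    (hζ : IsPrimitiveRoot ζ 5) {α : L} (σ : L ≃ₐ[K] L) (hσ : σ α = algebraMap K L ζ * α)
    (b : Module.Basis (Fin 5) K L) (hb : ∀ i, b i = (α ^ 2) ^ (i : ℕ)) {x : L} (hx : σ x = x) :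
    ∃ c : K, algebraMap K L c = x := by
  have hσb (i : Fin 5) : σ (b i) = ζ ^ (2 * (i : ℕ)) • b i := by
    rw [hb, map_pow, map_pow, hσ, Algebra.smul_def, map_pow]
    ring
  have hcoord (i : Fin 5) : b.repr x i * ζ ^ (2 * (i : ℕ)) = b.repr x i := by
    have h : ∑ j, (b.repr x j * ζ ^ (2 * (j : ℕ))) • b j = x := by
      conv_rhs => rw [← hx, ← b.sum_repr x]
      simp only [map_sum, map_smul, hσb, smul_smul]
    conv_rhs => rw [← h, b.repr_sum_self]
  have hzero (i : Fin 5) (hi : i ≠ 0) : b.repr x i = 0 := by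
    by_contra hne
    have h1 : ζ ^ (2 * (i : ℕ)) = 1 := mul_left_cancel₀ hne (by rw [hcoord, mul_one])
    have h2 := hζ.dvd_of_pow_eq_one _ h1
    omega
  refine ⟨b.repr x 0, ?_⟩
  conv_rhs => rw [← b.sum_repr x]
  rw [Finset.sum_eq_single 0 (fun i _ hi => by rw [hzero i hi, zero_smul]) (by simp), hb,
    Algebra.smul_def]
  simp

open MvPolynomial in
/-- The substitution `p ↦ p ∘ M_{a,5}` as an algebra endomorphism. -/
noncomputable def shiftHom {K : Type*} [Field K] (a : K) :
    MvPolynomial (Fin 5) K →ₐ[K] MvPolynomial (Fin 5) K :=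
  aeval (fun i : Fin 5 => if i = 4 then C a * X 0 else X (i + 1))

open MvPolynomial in
lemma shiftHom_isHomogeneous {K : Type*} [Field K] (a : K) {p : MvPolynomial (Fin 5) K} {n : ℕ}
    (hp : p.IsHomogeneous n) : (shiftHom a p).IsHomogeneous n := by
  rw [← one_mul n]
  refine hp.aeval _ fun i => ?_
  split_ifs
  · exact isHomogeneous_C_mul_X _ _
  · exact isHomogeneous_X _ _

open MvPolynomial in
lemma shiftHom_iterate_isHomogeneous {K : Type*} [Field K] (a : K) {p : MvPolynomial (Fin 5) K}
    {n : ℕ} (hp : p.IsHomogeneous n) (k : ℕ) : ((shiftHom a)^[k] p).IsHomogeneous n := by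
  induction k with
  | zero => exact hp
  | succ k ih =>
    rw [Function.iterate_succ_apply']
    exact shiftHom_isHomogeneous a ih

open MvPolynomial in
/-- `M_{a,5}⁵` is the scalar `a`, hence acts on forms of degree `n` as `aⁿ`. -/
lemma shiftHom_iterate_five {K : Type*} [Field K] (a : K) {p : MvPolynomial (Fin 5) K} {n : ℕ}
    (hp : p.IsHomogeneous n) : (shiftHom a)^[5] p = a ^ n • p := by
  have hC : shiftHom a (C a) = C a := by rw [algHom_C, algebraMap_eq]
  have hX (i : Fin 5) : shiftHom a (X i) = if i = 4 then C a * X 0 else X (i + 1) := aeval_X _ _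
  have h0 : shiftHom a (X 0) = X 1 := (hX 0).trans (if_neg (by decide))
  have h1 : shiftHom a (X 1) = X 2 := (hX 1).trans (if_neg (by decide))
  have h2 : shiftHom a (X 2) = X 3 := (hX 2).trans (if_neg (by decide))
  have h3 : shiftHom a (X 3) = X 4 := (hX 3).trans (if_neg (by decide))
  have h4 : shiftHom a (X 4) = C a * X 0 := (hX 4).trans (if_pos rfl)
  have hcomp : ((((shiftHom a).comp (shiftHom a)).comp (shiftHom a)).comp (shiftHom a)).comp
      (shiftHom a) = aeval (fun i : Fin 5 => C a * X i) := by
    refine algHom_ext fun i => ?_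
    rw [aeval_X]
    simp only [AlgHom.comp_apply]
    obtain rfl | rfl | rfl | rfl | rfl : i = 0 ∨ i = 1 ∨ i = 2 ∨ i = 3 ∨ i = 4 := by omega
    all_goals simp only [h0, h1, h2, h3, h4, map_mul, hC]
  have h := DFunLike.congr_fun hcomp p
  rw [aeval_mul_of_isHomogeneous hp, aeval_X_left_apply, ← map_pow, ← smul_eq_C_mul] at h
  rw [← h]
  simp only [Function.iterate_succ_apply, Function.iterate_zero_apply, AlgHom.comp_apply]

open MvPolynomial in
lemma aeval_shiftHom_iterate {K L : Type*} [Field K] [Field L] [Algebra K L] {a : K} {α : L}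
    (hα : α ^ 5 = algebraMap K L a) {p : MvPolynomial (Fin 5) K} {n : ℕ}
    (hp : p.IsHomogeneous n) (k : ℕ) :
    aeval (fun i : Fin 5 => α ^ (i : ℕ)) ((shiftHom a)^[k] p) =
      (α ^ n) ^ k * aeval (fun i : Fin 5 => α ^ (i : ℕ)) p := by
  -- `v₀` is an eigenvector of `M_{a,5}` with eigenvalue `α`.
  have hcomp : (aeval (fun i : Fin 5 => α ^ (i : ℕ))).comp (shiftHom a) =
      aeval (R := K) (fun i : Fin 5 => α * α ^ (i : ℕ)) := by
    refine algHom_ext fun i => ?_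
    fin_cases i <;> simp [shiftHom, ← hα, ← pow_succ']
  induction k with
  | zero => simp
  | succ k ih =>
    have h := DFunLike.congr_fun hcomp ((shiftHom a)^[k] p)
    rw [AlgHom.comp_apply,
      aeval_mul_of_isHomogeneous (shiftHom_iterate_isHomogeneous a hp k), ih] at h
    rw [Function.iterate_succ_apply', h]
    ring

/-- Multiplication by a nonzero `q` preserves independence, so a family sent by `e` to the
multiples `b i * q` of a basis is itself independent. -/
lemma linearIndependent_of_basis_mul {K L V ι : Type*} [Field K] [Field L] [Algebra K L]
    [AddCommGroup V] [Module K V] (b : Module.Basis ι K L) (e : V →ₗ[K] L) (w : ι → V) {q : L}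
    (hq : q ≠ 0) (h : ∀ i, e (w i) = b i * q) : LinearIndependent K w := by
  refine LinearIndependent.of_comp e ?_
  have hinj : LinearMap.ker (LinearMap.mulRight K q) = ⊥ :=
    LinearMap.ker_eq_bot.mpr (mul_left_injective₀ hq)
  have hfun : e ∘ w = LinearMap.mulRight K q ∘ b := by
    funext i
    simp [h]
  rw [hfun]
  exact b.linearIndependent.map' _ hinj

open MvPolynomial in
/-- in the 5-dimensional space `W` spanned by the `M_S`-translates of a
quadratic form `Q₀` with `Q₀(v₀) ≠ 0`, there is a form `Q` normalized by
`Q(v₀) = Q(v₁) ≠ 0`; any such `Q` has its translates forming a basis of `W`, and `Q`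
is unique up to a scalar in `K`. -/
theorem stmt11 (K : Type*) [Field K] (hchar : (5 : K) ≠ 0)
    (ζ : K) (hζ : IsPrimitiveRoot ζ 5)
    (a : K) (ha : a ≠ 0) (hnp : ¬∃ c : K, c ^ 5 = a)
    (L : Type*) [Field L] [Algebra K L] (α : L) (hα : α ^ 5 = algebraMap K L a)
    (hgen : Algebra.adjoin K {α} = ⊤)
    (σ : L ≃ₐ[K] L) (hσ : σ α = algebraMap K L ζ * α)
    (Q₀ : MvPolynomial (Fin 5) K) (hQ₀2 : Q₀.IsHomogeneous 2) :
    let v : Fin 5 → Fin 5 → L := fun j i => (α * algebraMap K L ζ ^ (j : ℕ)) ^ (i : ℕ)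
    let T : MvPolynomial (Fin 5) K → MvPolynomial (Fin 5) K := fun p =>
      aeval (fun i : Fin 5 => if i = 4 then C a * X 0 else X (i + 1)) p
    let W : Submodule K (MvPolynomial (Fin 5) K) :=
      Submodule.span K (Set.range fun i : Fin 5 => T^[(i : ℕ)] Q₀)
    aeval (v 0) Q₀ ≠ 0 →
    ((∃ Q ∈ W, aeval (v 0) Q = aeval (v 1) Q ∧ aeval (v 0) Q ≠ 0) ∧
     (∀ Q ∈ W, aeval (v 0) Q = aeval (v 1) Q → aeval (v 0) Q ≠ 0 →
        LinearIndependent K (fun i : Fin 5 => T^[(i : ℕ)] Q) ∧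
        Submodule.span K (Set.range fun i : Fin 5 => T^[(i : ℕ)] Q) = W) ∧
     (∀ Q ∈ W, ∀ Q' ∈ W,
        aeval (v 0) Q = aeval (v 1) Q → aeval (v 0) Q ≠ 0 →
        aeval (v 0) Q' = aeval (v 1) Q' → aeval (v 0) Q' ≠ 0 →
        ∃ c : K, c ≠ 0 ∧ Q' = c • Q)) := by
  intro v T W hQ₀
  obtain ⟨b, hb⟩ := exists_basis_sq ha hnp hα hgen
  have hv0 : v 0 = fun i : Fin 5 => α ^ (i : ℕ) := by
    funext i
    simp [v]
  have hT : T = shiftHom a := rfl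
  have heval {Q : MvPolynomial (Fin 5) K} (hQ : Q.IsHomogeneous 2) (i : Fin 5) :
      (aeval (R := K) (v 0)).toLinearMap (T^[(i : ℕ)] Q) = b i * aeval (v 0) Q := by
    rw [hb, hv0, hT]
    exact aeval_shiftHom_iterate hα hQ i
  have hli {Q : MvPolynomial (Fin 5) K} (hQ : Q.IsHomogeneous 2) (hne : aeval (v 0) Q ≠ 0) :
      LinearIndependent K (fun i : Fin 5 => T^[(i : ℕ)] Q) :=
    linearIndependent_of_basis_mul b _ _ hne (heval hQ)
  have hsigma (Q : MvPolynomial (Fin 5) K) : aeval (v 1) Q = σ (aeval (v 0) Q) := by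
    have h : (aeval (v 1) : MvPolynomial (Fin 5) K →ₐ[K] L) =
        (σ : L →ₐ[K] L).comp (aeval (v 0)) := by
      refine algHom_ext fun i => ?_
      simp [v, hσ, mul_comm]
    exact DFunLike.congr_fun h Q
  have hnorm {Q : MvPolynomial (Fin 5) K} (h : aeval (v 0) Q = aeval (v 1) Q) :
      ∃ c : K, algebraMap K L c = aeval (v 0) Q :=
    mem_range_of_fixed hζ σ hσ b hb (by rw [← hsigma, h])
  have hWhom : W ≤ homogeneousSubmodule (Fin 5) K 2 := by
    refine Submodule.span_le.mpr ?_
    rintro _ ⟨i, rfl⟩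
    exact shiftHom_iterate_isHomogeneous a hQ₀2 i
  have hWT : ∀ Q ∈ W, T Q ∈ W := by
    suffices W ≤ W.comap (shiftHom a).toLinearMap from this
    refine Submodule.span_le.mpr ?_
    rintro _ ⟨i, rfl⟩
    change T (T^[(i : ℕ)] Q₀) ∈ W
    rw [← Function.iterate_succ_apply' T]
    by_cases hi : (i : ℕ) = 4
    · rw [hi, hT, shiftHom_iterate_five a hQ₀2]
      exact W.smul_mem _ (Submodule.subset_span ⟨0, rfl⟩)
    · exact Submodule.subset_span ⟨⟨i + 1, by omega⟩, rfl⟩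
  have hWTk (k : ℕ) : ∀ Q ∈ W, T^[k] Q ∈ W := by
    intro Q hQ
    induction k with
    | zero => exact hQ
    | succ k ih =>
      rw [Function.iterate_succ_apply']
      exact hWT _ ih
  have hzero : ∀ Q ∈ W, aeval (v 0) Q = 0 → Q = 0 := by
    intro Q hQ h0
    obtain ⟨c, rfl⟩ := (Submodule.mem_span_range_iff_exists_fun K).mp hQ
    have hsum : (∑ i, c i • b i) * aeval (v 0) Q₀ = 0 := by
      rw [← h0, map_sum, Finset.sum_mul]
      refine Finset.sum_congr rfl fun i _ => ?_
      rw [map_smul, smul_mul_assoc, ← heval hQ₀2 i]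
      rfl
    have hc := Fintype.linearIndependent_iff.mp b.linearIndependent c
      ((mul_eq_zero.mp hsum).resolve_right hQ₀)
    simp [hc]
  refine ⟨?_, ?_, ?_⟩
  · -- The coordinates of `1 / Q₀(v₀)` in the basis `β ^ i` give the form with value `1` at `v₀`.
    have h1 : aeval (v 0) (∑ i : Fin 5, b.repr (aeval (v 0) Q₀)⁻¹ i • T^[(i : ℕ)] Q₀) = 1 := by
      rw [map_sum, ← inv_mul_cancel₀ hQ₀]
      conv_rhs => rw [← b.sum_repr (aeval (v 0) Q₀)⁻¹, Finset.sum_mul]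
      refine Finset.sum_congr rfl fun i _ => ?_
      rw [map_smul, smul_mul_assoc, ← heval hQ₀2 i]
      rfl
    refine ⟨_, (Submodule.mem_span_range_iff_exists_fun K).mpr
      ⟨fun i => b.repr (aeval (v 0) Q₀)⁻¹ i, rfl⟩, ?_, ?_⟩
    · rw [hsigma, h1, map_one]
    · rw [h1]
      exact one_ne_zero
  · intro Q hQ _ hne
    have hind := hli (hWhom hQ) hne
    refine ⟨hind, ?_⟩
    have : FiniteDimensional K W := FiniteDimensional.span_of_finite K (Set.finite_range _)
    refine Submodule.eq_of_le_of_finrank_eq (Submodule.span_le.mpr ?_) ?_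
    · rintro _ ⟨i, rfl⟩
      exact hWTk i Q hQ
    · rw [finrank_span_eq_card hind, finrank_span_eq_card (hli hQ₀2 hQ₀)]
  · intro Q hQ Q' hQ' hn hne hn' hne'
    obtain ⟨c, hc⟩ := hnorm hn
    obtain ⟨c', hc'⟩ := hnorm hn'
    have hc0 : c ≠ 0 := by
      rintro rfl
      exact hne (by rw [← hc, map_zero])
    have hc0' : c' ≠ 0 := by
      rintro rfl
      exact hne' (by rw [← hc', map_zero])
    refine ⟨c' / c, div_ne_zero hc0' hc0, sub_eq_zero.mp ?_⟩
    refine hzero _ (W.sub_mem hQ' (W.smul_mem _ hQ)) ?_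
    rw [map_sub, map_smul, ← hc, ← hc', Algebra.smul_def, ← map_mul, div_mul_cancel₀ _ hc0,
      sub_self]
end

section
/- Let K be a field of characteristic different from 5 containing a primitive 5th root of unity ζ, let a ∈ K be nonzero and not a fifth power, let L = K(α) with α⁵ = a, and let σ be the generator of Gal(L/K) with σ(α) = ζα. Let β ∈ L be nonzero, written β = Σ_{k=0}^{4} β_k αᵏ with β_k ∈ K; set M_S = M_{a,5} and M_T = D₅·(Σ_{k=0}^{4} β_k M_Sᵏ). For j ∈ Z/5Z let v_j = (1, αζʲ, (αζʲ)², (αζʲ)³, (αζʲ)⁴) ∈ L⁵. Let Q be a quadratic form in x₀, ..., x₄ with coefficients in K such that Q(v₀) = Q(v₁) ≠ 0, and suppose there exist γ₀, ..., γ₄ ∈ K with Q∘M_T = Σ_{i=0}^{4} γ_i (Q∘M_Sⁱ). Let B(w, v) = Q(w + v) − Q(w) − Q(v). Then: (1) Q(v_j) = Q(v₀) for all j; (2) Σ_{i=0}^{4} γ_i α²ⁱ = β²; (3) for all i, B(v_{i+1}, v_{i−1}) = B(v₁, v₄)·∏_{j=1}^{i} σ^{j−1}(β²/(σ(β)·σ⁴(β)));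 and (4) for all i, B(v_{i+2}, v_{i−2}) = B(v₂, v₃)·∏_{j=1}^{i} σ^{j−1}(β²/(σ²(β)·σ³(β))). (Indices of the v's are taken mod 5.) -/
/-!
Write `u n = (1, t, t², t³, t⁴)` for `t = α ζⁿ`, a fifth root of `a`. It is an eigenvector of `M_S`
with eigenvalue `t`, and `D₅` sends it to `u (n + 1)`; as `σⁿ β = Σ βₖ tᵏ`, this gives
`M_T (u n) = σⁿ β • u (n + 1)`. Evaluating `Q ∘ M_T = Σ γᵢ (Q ∘ M_Sⁱ)` at `u n`, and polarizing
at the pair `(u m, u n)`, yields (with `g = Σ γᵢ α²ⁱ`)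

* `(σⁿ β)² Q(u (n + 1)) = σⁿ g · Q(u n)`,
* `σᵐ β · σⁿ β · B(u (m + 1), u (n + 1)) = (Σ γᵢ (α² ζᵐ⁺ⁿ)ⁱ) · B(u m, u n)`.

At `n = 0` the first relation and the normalization `Q(v₀) = Q(v₁) ≠ 0` force `g = β²`; the relation
then propagates `Q(u n) = Q(u 0)`. For indices `n + p`, `n + q` with `p + q = 5` the factor
in the second relation is `σⁿ g = σⁿ(β²)`, and the product formulas follow by induction on `n`.
-/

namespace FifthRootQuadric

open MvPolynomial

section Quadratic

variable {ι K L : Type*} [Field K] [Field L] [Algebra K L]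

/-- The polarization `Q(x + y) - Q(x) - Q(y)` of a polynomial, evaluated over `L`. -/
noncomputable def polarAt (Q : MvPolynomial ι K) (x y : ι → L) : L :=
  aeval (x + y) Q - aeval x Q - aeval y Q

lemma exists_eq_single_add {d : ι →₀ ℕ} {n : ℕ} (hd : d.degree = n + 1) :
    ∃ (i : ι) (e : ι →₀ ℕ), e.degree = n ∧ d = Finsupp.single i 1 + e := by
  have hd0 : d ≠ 0 := by rintro rfl; simp at hd
  obtain ⟨i, hi⟩ := Finsupp.ne_iff.mp hd0
  have hle : Finsupp.single i 1 ≤ d := by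
    rw [Finsupp.single_le_iff]
    exact Nat.one_le_iff_ne_zero.mpr hi
  obtain ⟨e, rfl⟩ := exists_add_of_le hle
  refine ⟨i, e, ?_, rfl⟩
  rw [map_add, Finsupp.degree_single] at hd
  omega

lemma exists_eq_single_add_single {d : ι →₀ ℕ} (hd : d.degree = 2) :
    ∃ i j, d = Finsupp.single i 1 + Finsupp.single j 1 := by
  obtain ⟨i, e, he, rfl⟩ := exists_eq_single_add hd
  obtain ⟨j, f, hf, rfl⟩ := exists_eq_single_add he
  rw [Finsupp.degree_eq_zero_iff] at hf
  exact ⟨i, j, by rw [hf, add_zero]⟩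

lemma aeval_monomial_single_add_single (i j : ι) (c : K) (x : ι → L) :
    aeval x (monomial (Finsupp.single i 1 + Finsupp.single j 1) c) =
      algebraMap K L c * (x i * x j) := by
  rw [aeval_monomial, Finsupp.prod_add_index' (by simp) (by intros; rw [pow_add])]
  simp

lemma polarAt_sum {κ : Type*} (s : Finset κ) (f : κ → MvPolynomial ι K) (x y : ι → L) :
    polarAt (∑ k ∈ s, f k) x y = ∑ k ∈ s, polarAt (f k) x y := by
  simp [polarAt, map_sum, Finset.sum_sub_distrib]

lemma polarAt_smul_smul {Q : MvPolynomial ι K} (hQ : Q.IsHomogeneous 2) (c d : L)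
    (x y : ι → L) : polarAt Q (c • x) (d • y) = c * d * polarAt Q x y := by
  rw [Q.as_sum, polarAt_sum, polarAt_sum, Finset.mul_sum]
  refine Finset.sum_congr rfl fun e he => ?_
  have hdeg : e.degree = 2 := by
    rw [Finsupp.degree_eq_weight_one]
    exact hQ (mem_support_iff.mp he)
  obtain ⟨i, j, rfl⟩ := exists_eq_single_add_single hdeg
  simp only [polarAt, aeval_monomial_single_add_single, Pi.add_apply, Pi.smul_apply, smul_eq_mul]
  ring

lemma aeval_smul_of_isHomogeneous_two {Q : MvPolynomial ι K} (hQ : Q.IsHomogeneous 2) (c : L)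
    (x : ι → L) : aeval (c • x) Q = c ^ 2 * aeval x Q := by
  rw [Q.as_sum, map_sum, map_sum, Finset.mul_sum]
  refine Finset.sum_congr rfl fun e he => ?_
  have hdeg : e.degree = 2 := by
    rw [Finsupp.degree_eq_weight_one]
    exact hQ (mem_support_iff.mp he)
  obtain ⟨i, j, rfl⟩ := exists_eq_single_add_single hdeg
  simp only [aeval_monomial_single_add_single, Pi.smul_apply, smul_eq_mul]
  ring

/-- The pullback `Q ∘ N` of a polynomial along the linear substitution given by `N`. -/
noncomputable def pullback [Fintype ι] (N : Matrix ι ι K) (Q : MvPolynomial ι K) :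
    MvPolynomial ι K :=
  aeval (fun i => ∑ j, C (N i j) * X j) Q

lemma aeval_pullback [Fintype ι] (N : Matrix ι ι K) (Q : MvPolynomial ι K) (x : ι → L) :
    aeval x (pullback N Q) = aeval ((N.map (algebraMap K L)).mulVec x) Q := by
  rw [pullback, ← AlgHom.comp_apply, comp_aeval]
  congr 2
  funext i
  simp [Matrix.mulVec, dotProduct]

lemma polarAt_pullback [Fintype ι] (N : Matrix ι ι K) (Q : MvPolynomial ι K) (x y : ι → L) :
    polarAt (pullback N Q) x y =
      polarAt Q ((N.map (algebraMap K L)).mulVec x) ((N.map (algebraMap K L)).mulVec y) := by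
  simp only [polarAt, aeval_pullback, Matrix.mulVec_add]

end Quadratic

section Matrices

variable {K L : Type*} [Field K] [Field L] [Algebra K L]

/-- The twisted cyclic shift `(x₀, …, x₄) ↦ (x₁, …, x₄, a x₀)`. -/
def shift (a : K) : Matrix (ZMod 5) (ZMod 5) K :=
  Matrix.of fun i j => if j = i + 1 then (if i = 4 then a else 1) else 0

/-- The vector `(1, t, t², t³, t⁴)`. -/
def powVec (t : L) : ZMod 5 → L := fun i => t ^ i.val

lemma shift_mulVec {a : K} {t : L} (ht : t ^ 5 = algebraMap K L a) :
    ((shift a).map (algebraMap K L)).mulVec (powVec t) = t • powVec t := by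
  funext i
  have h : ((shift a).map (algebraMap K L)).mulVec (powVec t) i =
      algebraMap K L (if i = 4 then a else 1) * powVec t (i + 1) := by
    simp [shift, Matrix.mulVec, dotProduct, apply_ite (algebraMap K L)]
  rw [h]
  by_cases hi : i = 4
  · subst hi
    have h0 : ((4 : ZMod 5) + 1).val = 0 := by decide
    have h4 : (4 : ZMod 5).val = 4 := by decide
    simp only [if_true, powVec, h0, h4, Pi.smul_apply, smul_eq_mul, ← ht]
    ring
  · have h1 : (i + 1).val = i.val + 1 := by clear h; revert i; decide
    simp [hi, powVec, h1, pow_succ']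

lemma shift_pow_mulVec {a : K} {t : L} (ht : t ^ 5 = algebraMap K L a) (k : ℕ) :
    (((shift a) ^ k).map (algebraMap K L)).mulVec (powVec t) = t ^ k • powVec t := by
  induction k with
  | zero => simp [Matrix.map_one]
  | succ k ih =>
    rw [pow_succ, Matrix.map_mul, ← Matrix.mulVec_mulVec, shift_mulVec ht, Matrix.mulVec_smul, ih,
      smul_smul, pow_succ']

/-- On the eigenvector of `M_S` with eigenvalue `t`, the matrix `M_T` acts as multiplication by
`Σ βₖ tᵏ` followed by `t ↦ ζ t`. -/
lemma translate_mulVec {a ζ : K} {t : L} (ht : t ^ 5 = algebraMap K L a) (b : ZMod 5 → K) :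
    ((Matrix.diagonal (fun i : ZMod 5 => ζ ^ i.val) *
        ∑ k : ZMod 5, b k • shift a ^ k.val).map (algebraMap K L)).mulVec (powVec t) =
      (∑ k : ZMod 5, algebraMap K L (b k) * t ^ k.val) • powVec (t * algebraMap K L ζ) := by
  have hsum : ((∑ k : ZMod 5, b k • shift a ^ k.val).map (algebraMap K L)).mulVec (powVec t) =
      (∑ k : ZMod 5, algebraMap K L (b k) * t ^ k.val) • powVec t := by
    have : (∑ k : ZMod 5, b k • shift a ^ k.val).map (algebraMap K L) =
        ∑ k : ZMod 5, algebraMap K L (b k) • (shift a ^ k.val).map (algebraMap K L) := by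
      ext i j
      simp only [Matrix.map_apply, Matrix.sum_apply, Matrix.smul_apply, smul_eq_mul, map_sum,
        map_mul]
    rw [this, Matrix.sum_mulVec, Finset.sum_smul]
    refine Finset.sum_congr rfl fun k _ => ?_
    rw [Matrix.smul_mulVec, shift_pow_mulVec ht, smul_smul]
  rw [Matrix.map_mul, ← Matrix.mulVec_mulVec, hsum, Matrix.mulVec_smul]
  congr 1
  funext i
  rw [Matrix.diagonal_map (map_zero _), Matrix.mulVec_diagonal]
  simp [powVec, mul_pow, mul_comm]

end Matrices

end FifthRootQuadric

open MvPolynomial FifthRootQuadric in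
/-- for a normalized `K`-rational quadric `Q` (with `Q(v₀) = Q(v₁) ≠ 0`)
whose `M_T`-translate lies in the span of its `M_S`-translates with coefficients `γᵢ`,
one has `Q(v_j) = Q(v₀)` for all `j`, `Σ γᵢ α²ⁱ = β²`, and the stated recursions for the
bilinear values `B(v_{i+1}, v_{i-1})` and `B(v_{i+2}, v_{i-2})`. -/
theorem stmt12 (K : Type*) [Field K] (hchar : (5 : K) ≠ 0)
    (ζ : K) (hζ : IsPrimitiveRoot ζ 5)
    (a : K) (ha : a ≠ 0) (hnp : ¬∃ c : K, c ^ 5 = a)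
    (L : Type*) [Field L] [Algebra K L] (α : L) (hα : α ^ 5 = algebraMap K L a)
    (hgen : Algebra.adjoin K {α} = ⊤)
    (σ : L ≃ₐ[K] L) (hσ : σ α = algebraMap K L ζ * α)
    (β : L) (hβ : β ≠ 0) (βc : ZMod 5 → K)
    (hβeq : β = ∑ k : ZMod 5, algebraMap K L (βc k) * α ^ k.val)
    (Q : MvPolynomial (ZMod 5) K) (hQ2 : Q.IsHomogeneous 2)
    (γ : ZMod 5 → K) :
    let act : Matrix (ZMod 5) (ZMod 5) K → MvPolynomial (ZMod 5) K →
        MvPolynomial (ZMod 5) K := fun N p =>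
      aeval (fun i : ZMod 5 => ∑ j : ZMod 5, C (N i j) * X j) p
    let MS : Matrix (ZMod 5) (ZMod 5) K :=
      Matrix.of fun i j => if j = i + 1 then (if i = 4 then a else 1) else 0
    let D5 : Matrix (ZMod 5) (ZMod 5) K := Matrix.diagonal fun i => ζ ^ i.val
    let MT : Matrix (ZMod 5) (ZMod 5) K := D5 * ∑ k : ZMod 5, βc k • MS ^ k.val
    let v : ZMod 5 → ZMod 5 → L := fun j i => (α * algebraMap K L ζ ^ j.val) ^ i.val
    let B : (ZMod 5 → L) → (ZMod 5 → L) → L := fun w w' =>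
      aeval (w + w') Q - aeval w Q - aeval w' Q
    aeval (v 0) Q = aeval (v 1) Q → aeval (v 0) Q ≠ 0 →
    act MT Q = ∑ i : ZMod 5, γ i • act (MS ^ i.val) Q →
    ((∀ j : ZMod 5, aeval (v j) Q = aeval (v 0) Q) ∧
     (∑ i : ZMod 5, algebraMap K L (γ i) * α ^ (2 * i.val) = β ^ 2) ∧
     (∀ i : ZMod 5, B (v (i + 1)) (v (i - 1)) =
        B (v 1) (v 4) * ∏ j ∈ Finset.range i.val,
          (σ ^ j) (β ^ 2 / (σ β * (σ ^ 4 : L ≃ₐ[K] L) β))) ∧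
     (∀ i : ZMod 5, B (v (i + 2)) (v (i - 2)) =
        B (v 2) (v 3) * ∏ j ∈ Finset.range i.val,
          (σ ^ j) (β ^ 2 / ((σ ^ 2 : L ≃ₐ[K] L) β * (σ ^ 3 : L ≃ₐ[K] L) β)))) := by
  intro act MS D5 MT v B h01 hne hact
  set z : L := algebraMap K L ζ with hz
  have hz5 : z ^ 5 = 1 := by rw [hz, ← map_pow, hζ.pow_eq_one, map_one]
  let u : ℕ → ZMod 5 → L := fun n => powVec (α * z ^ n)
  have hroot : ∀ n, (α * z ^ n) ^ 5 = algebraMap K L a := by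
    intro n
    rw [mul_pow, ← pow_mul, mul_comm n 5, pow_mul, hz5, one_pow, mul_one, hα]
  have hvu : ∀ n : ℕ, v n = u n := by
    intro n
    have : z ^ (n : ZMod 5).val = z ^ n := by
      rw [ZMod.val_natCast, ← pow_eq_pow_mod n hz5]
    simp only [v, u, ← hz]
    rw [this]
    rfl
  have hσz : ∀ c : K, ∀ n : ℕ, (σ ^ n) (algebraMap K L c) = algebraMap K L c :=
    fun c n => (σ ^ n).commutes c
  have hσα : ∀ n : ℕ, (σ ^ n) α = α * z ^ n := by
    intro n
    induction n with
    | zero => simp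
    | succ n ih =>
      rw [pow_succ, AlgEquiv.mul_apply, hσ, map_mul, hσz, ih, pow_succ]
      ring
  have hσβ : ∀ n : ℕ, (σ ^ n) β = ∑ k : ZMod 5, algebraMap K L (βc k) * (α * z ^ n) ^ k.val := by
    intro n
    conv_lhs => rw [hβeq]
    simp only [map_sum, map_mul, map_pow, hσz, hσα]
  have hσβ0 : ∀ n : ℕ, (σ ^ n) β ≠ 0 := fun n => (map_ne_zero (σ ^ n)).mpr hβ
  have hMT : ∀ n : ℕ, (MT.map (algebraMap K L)).mulVec (u n) = (σ ^ n) β • u (n + 1) := by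
    intro n
    rw [hσβ]
    have := translate_mulVec (ζ := ζ) (hroot n) βc
    rw [mul_assoc, ← hz, ← pow_succ] at this
    exact this
  have hMS : ∀ n k : ℕ, ((MS ^ k).map (algebraMap K L)).mulVec (u n) = (α * z ^ n) ^ k • u n :=
    fun n k => shift_pow_mulVec (hroot n) k
  have hact' : pullback MT Q = ∑ i : ZMod 5, γ i • pullback (MS ^ i.val) Q := hact
  -- The two relations obtained by evaluating and polarizing the hypothesis at eigenvectors.
  have hquad : ∀ n : ℕ, (σ ^ n) β ^ 2 * aeval (u (n + 1)) Q =
      (∑ i : ZMod 5, algebraMap K L (γ i) * (α * z ^ n) ^ (2 * i.val)) * aeval (u n) Q := by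
    intro n
    have h := congrArg (aeval (u n)) hact'
    rw [aeval_pullback, hMT, aeval_smul_of_isHomogeneous_two hQ2, map_sum] at h
    rw [h, Finset.sum_mul]
    refine Finset.sum_congr rfl fun i _ => ?_
    rw [map_smul, aeval_pullback, hMS, aeval_smul_of_isHomogeneous_two hQ2, Algebra.smul_def]
    ring
  have hpol : ∀ m n : ℕ, (σ ^ m) β * (σ ^ n) β * polarAt Q (u (m + 1)) (u (n + 1)) =
      (∑ i : ZMod 5, algebraMap K L (γ i) * (α ^ 2 * z ^ (m + n)) ^ i.val) *
        polarAt Q (u m) (u n) := by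
    intro m n
    have h : polarAt (pullback MT Q) (u m) (u n) =
        polarAt (∑ i : ZMod 5, γ i • pullback (MS ^ i.val) Q) (u m) (u n) := by rw [hact']
    rw [polarAt_pullback, hMT, hMT, polarAt_smul_smul hQ2, polarAt_sum] at h
    rw [h, Finset.sum_mul]
    refine Finset.sum_congr rfl fun i _ => ?_
    have hsm : polarAt (γ i • pullback (MS ^ i.val) Q) (u m) (u n) =
        algebraMap K L (γ i) * polarAt (pullback (MS ^ i.val) Q) (u m) (u n) := by
      simp only [polarAt, map_smul]
      simp only [Algebra.smul_def]
      ring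
    rw [hsm, polarAt_pullback, hMS, hMS, polarAt_smul_smul hQ2]
    ring
  have hv0 : v 0 = u 0 := by simpa using hvu 0
  have hv1 : v 1 = u 1 := by simpa using hvu 1
  have hg : ∑ i : ZMod 5, algebraMap K L (γ i) * α ^ (2 * i.val) = β ^ 2 := by
    have h := hquad 0
    rw [zero_add, ← hv0, ← hv1, ← h01] at h
    simpa using (mul_right_cancel₀ hne h).symm
  have hσg : ∀ n : ℕ, ∑ i : ZMod 5, algebraMap K L (γ i) * (α * z ^ n) ^ (2 * i.val) =
      (σ ^ n) β ^ 2 := by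
    intro n
    rw [← map_pow (σ ^ n), ← hg]
    simp only [map_sum, map_mul, map_pow, hσz, hσα]
  have hQu : ∀ n : ℕ, aeval (u n) Q = aeval (u 0) Q := by
    intro n
    induction n with
    | zero => rfl
    | succ n ih =>
      rw [← ih]
      have h := hquad n
      rw [hσg] at h
      exact mul_left_cancel₀ (pow_ne_zero 2 (hσβ0 n)) h
  have hrec : ∀ p q : ℕ, p + q = 5 → ∀ n : ℕ, polarAt Q (u (n + p)) (u (n + q)) =
      polarAt Q (u p) (u q) * ∏ j ∈ Finset.range n,
        (σ ^ j) (β ^ 2 / ((σ ^ p) β * (σ ^ q) β)) := by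
    intro p q hpq n
    induction n with
    | zero => simp
    | succ n ih =>
      rw [Finset.prod_range_succ, ← mul_assoc, ← ih]
      have h := hpol (n + p) (n + q)
      -- `z ^ 5 = 1` turns the exponent `2n + 5` into `2n`, so the factor is `σⁿ g`.
      have hzz : α ^ 2 * z ^ (n + p + (n + q)) = (α * z ^ n) ^ 2 := by
        rw [show n + p + (n + q) = n * 2 + 5 by omega, pow_add, hz5, pow_mul]
        ring
      simp only [hzz, ← pow_mul] at h
      rw [hσg] at h
      rw [map_div₀, map_mul, map_pow, ← AlgEquiv.mul_apply, ← AlgEquiv.mul_apply, ← pow_add,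
        ← pow_add, mul_div_assoc', eq_div_iff (mul_ne_zero (hσβ0 _) (hσβ0 _)),
        add_right_comm n 1 p, add_right_comm n 1 q]
      linear_combination h
  have hBv : ∀ (i : ZMod 5) (p q : ℕ), p + q = 5 → B (v (i + p)) (v (i + q)) =
      B (v p) (v q) * ∏ j ∈ Finset.range i.val,
        (σ ^ j) (β ^ 2 / ((σ ^ p) β * (σ ^ q) β)) := by
    intro i p q hpq
    have hi : ∀ r : ℕ, v (i + r) = u (i.val + r) := by
      intro r
      rw [← hvu, Nat.cast_add, ZMod.natCast_rightInverse i]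
    rw [hi, hi, hvu, hvu]
    exact hrec p q hpq i.val
  refine ⟨fun j => ?_, hg, fun i => ?_, fun i => ?_⟩
  · have hj := hvu j.val
    rw [ZMod.natCast_rightInverse j] at hj
    rw [hj, hv0, hQu]
  · have h4 : i + ((4 : ℕ) : ZMod 5) = i - 1 := by revert i; decide
    have h := hBv i 1 4 rfl
    rw [h4] at h
    simpa using h
  · have h3 : i + ((3 : ℕ) : ZMod 5) = i - 2 := by revert i; decide
    have h := hBv i 2 3 rfl
    rw [h3] at h
    simpa using h
end

section
/- Let K be a field of characteristic different from 5 containing a primitive 5th root of unity ζ, let a ∈ K be nonzero and not a fifth power, let L = K(α) with α⁵ = a, and let σ be the generator of Gal(L/K) with σ(α) = ζα. Let β ∈ L be nonzero, set u₁ = σ⁴(β)/β and u₂ = σ³(β)σ⁴(β)/(β·σ(β)), and let λ ∈ K be nonzero. Define the quadratic form Q'(x) = Σ_{i∈Z/5Z} x_i² + λ·Σ_{i∈Z/5Z} σ^{i+1}(u₁)·x_i x_{i+2} − λ⁻¹·Σ_{i∈Z/5Z} σ^{i+3}(u₂)·x_i x_{i+1} (indices mod 5), and set M_S' = α·D₅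 and M_T' = M_{1,5}⁻¹·diag(β, σ(β), σ²(β), σ³(β), σ⁴(β)). Then there exist γ₀, ..., γ₄ ∈ K such that Q'∘M_T' = Σ_{i=0}^{4} γ_i (Q'∘(M_S')ⁱ) and Σ_{i=0}^{4} γ_i α²ⁱ = β². -/
/-!
Write `b i = σ^i β` for `i` modulo 5; this makes sense because `σ⁵` fixes the generator `α`.
The powers `α^(2k)`, `0 ≤ k ≤ 4`, span `L` over `K` (`exists_even_power_coords`), so
`β² = ∑ γ_k α^(2k)` for some `γ_k ∈ K`.

The operator `∑ γ_k (M_S')^k` multiplies the monomial `x_i x_j` by `∑ γ_k α^(2k) ζ^((i+j)k)`. If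
`i + j = 2m` modulo 5, this is `σ^m` applied to the expression for `β²`, that is, `(b m)²`.
On the other hand `M_T'` substitutes `b (i-1) x_(i-1)` for `x_i`. As
`σ^(i+1) u₁ = b i / b (i+1)` and
`σ^(i+3) u₂ = b (i+1) b (i+2) / (b (i+3) b (i+4))`, the coefficients of `x_i²`, `x_i x_(i+2)`
and `x_i x_(i+1)` on both sides are `(b i)²`, `λ b i b (i+1)` and
`-λ⁻¹ b (i+1) b (i+2) b (i+3) / b (i+4)`.
-/

/-- If `α⁵ = a ≠ 0`, the even powers `1, α², α⁴, α⁶, α⁸` span `K[α]`: since `6 ≡ 1` modulo 5,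
each `αⁿ` is a scalar multiple of `α^(2k)` with `k = 3n mod 5`. -/
theorem exists_even_power_coords {K L : Type*} [Field K] [Field L] [Algebra K L] {a : K}
    (ha : a ≠ 0) {α : L} (hα : α ^ 5 = algebraMap K L a)
    (hgen : Algebra.adjoin K {α} = ⊤) (x : L) :
    ∃ γ : ZMod 5 → K, ∑ i : ZMod 5, algebraMap K L (γ i) * α ^ (2 * i.val) = x := by
  have hx : x ∈ Algebra.adjoin K {α} := hgen ▸ Algebra.mem_top
  rw [Algebra.adjoin_singleton_eq_range_aeval] at hx
  obtain ⟨p, rfl⟩ := hx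
  suffices h : Polynomial.aeval α p ∈
      Submodule.span K (Set.range fun i : ZMod 5 => α ^ (2 * i.val)) by
    obtain ⟨γ, hγ⟩ := (Submodule.mem_span_range_iff_exists_fun K).1 h
    exact ⟨γ, by simpa [Algebra.smul_def] using hγ⟩
  rw [Polynomial.aeval_eq_sum_range]
  refine Submodule.sum_mem _ fun n _ => Submodule.smul_mem _ _ ?_
  have ha' : algebraMap K L a ≠ 0 := by simpa using ha
  have h : α ^ n = (a ^ (2 * (3 * n / 5)) / a ^ n) • α ^ (2 * ((3 * n : ℕ) : ZMod 5).val) := by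
    rw [ZMod.val_natCast, Algebra.smul_def, map_div₀, map_pow, map_pow, div_mul_eq_mul_div,
      eq_div_iff (pow_ne_zero _ ha'), ← hα, ← pow_mul, ← pow_mul, ← pow_add, ← pow_add]
    congr 1
    omega
  rw [h]
  exact Submodule.smul_mem _ _ (Submodule.subset_span ⟨_, rfl⟩)

theorem sigma_pow_apply {K L : Type*} [Field K] [Field L] [Algebra K L] {ζ : K} {α : L}
    {σ : L ≃ₐ[K] L} (hσ : σ α = algebraMap K L ζ * α) (n : ℕ) :
    (σ ^ n) α = algebraMap K L ζ ^ n * α := by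
  induction n with
  | zero => simp
  | succ n ih =>
    rw [pow_succ', AlgEquiv.mul_apply, ih, map_mul, map_pow, AlgEquiv.commutes, hσ]
    ring

theorem sigma_pow_five {K L : Type*} [Field K] [Field L] [Algebra K L] {ζ : K} {α : L}
    (hgen : Algebra.adjoin K {α} = ⊤) {σ : L ≃ₐ[K] L}
    (hσ : σ α = algebraMap K L ζ * α) (hζ : algebraMap K L ζ ^ 5 = 1) : σ ^ 5 = 1 := by
  have h : ((σ ^ 5 : L ≃ₐ[K] L) : L →ₐ[K] L) = ((1 : L ≃ₐ[K] L) : L →ₐ[K] L) := by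
    refine AlgHom.ext_of_adjoin_eq_top hgen ?_
    rintro x rfl
    simp only [AlgEquiv.coe_toAlgHom, sigma_pow_apply hσ, hζ]
    simp
  ext x
  exact DFunLike.congr_fun h x

open MvPolynomial in
/-- The quadratic form with coefficients `c₀ i`, `c₁ i`, `c₂ i` at `x_i²`, `x_i x_(i+2)`,
`x_i x_(i+1)`, indices modulo 5. -/
noncomputable def quad {L : Type*} [Field L] (c₀ c₁ c₂ : ZMod 5 → L) : MvPolynomial (ZMod 5) L :=
  ∑ i, (C (c₀ i) * X i ^ 2) + ∑ i, C (c₁ i) * (X i * X (i + 2))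
    + ∑ i, C (c₂ i) * (X i * X (i + 1))

open MvPolynomial in
theorem aeval_quad_diag {L : Type*} [Field L] (c₀ c₁ c₂ d : ZMod 5 → L) :
    aeval (fun i => C (d i) * X i : ZMod 5 → MvPolynomial (ZMod 5) L) (quad c₀ c₁ c₂)
      = quad (fun i => c₀ i * d i ^ 2) (fun i => c₁ i * (d i * d (i + 2)))
          (fun i => c₂ i * (d i * d (i + 1))) := by
  simp only [quad, map_add, map_sum, map_mul, map_pow, aeval_X, aeval_C, algebraMap_eq]
  refine congrArg₂ (· + ·) (congrArg₂ (· + ·) ?_ ?_) ?_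
  · exact Finset.sum_congr rfl fun i _ => by ring
  · exact Finset.sum_congr rfl fun i _ => by ring
  · exact Finset.sum_congr rfl fun i _ => by ring

open MvPolynomial in
theorem aeval_quad_shift {L : Type*} [Field L] (c₀ c₁ c₂ d : ZMod 5 → L) :
    aeval (fun i => C (d (i - 1)) * X (i - 1) : ZMod 5 → MvPolynomial (ZMod 5) L)
        (quad c₀ c₁ c₂)
      = quad (fun i => c₀ (i + 1) * d i ^ 2) (fun i => c₁ (i + 1) * (d i * d (i + 2)))
          (fun i => c₂ (i + 1) * (d i * d (i + 1))) := by
  have h1 : ∀ i : ZMod 5, i + 1 - 1 = i := fun i => by ring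
  have h2 : ∀ i : ZMod 5, i + 1 + 2 - 1 = i + 2 := fun i => by ring
  simp only [quad, map_add, map_sum, map_mul, map_pow, aeval_X, aeval_C, algebraMap_eq]
  refine congrArg₂ (· + ·) (congrArg₂ (· + ·) ?_ ?_) ?_
  · rw [← Equiv.sum_comp (Equiv.addRight (1 : ZMod 5))]
    exact Finset.sum_congr rfl fun i _ => by simp only [Equiv.coe_addRight, h1]; ring
  · rw [← Equiv.sum_comp (Equiv.addRight (1 : ZMod 5))]
    exact Finset.sum_congr rfl fun i _ => by simp only [Equiv.coe_addRight, h1, h2]; ring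
  · rw [← Equiv.sum_comp (Equiv.addRight (1 : ZMod 5))]
    exact Finset.sum_congr rfl fun i _ => by simp only [Equiv.coe_addRight, h1]; ring

open MvPolynomial in
theorem sum_smul_quad {L : Type*} [Field L] (g : ZMod 5 → L) (c₀ c₁ c₂ : ZMod 5 → ZMod 5 → L) :
    ∑ k, g k • quad (c₀ k) (c₁ k) (c₂ k)
      = quad (fun i => ∑ k, g k * c₀ k i) (fun i => ∑ k, g k * c₁ k i)
          (fun i => ∑ k, g k * c₂ k i) := by
  simp only [quad, smul_add, Finset.sum_add_distrib, Finset.smul_sum, map_sum, Finset.sum_mul,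
    smul_eq_C_mul, C_mul, mul_assoc]
  refine congrArg₂ (· + ·) (congrArg₂ (· + ·) ?_ ?_) ?_
  · exact Finset.sum_comm
  · exact Finset.sum_comm
  · exact Finset.sum_comm

open MvPolynomial in
/-- the quadric `Q'` in eigencoordinates satisfies
`Q'∘M_T' = Σ γᵢ (Q'∘(M_S')ⁱ)` with coefficients `γᵢ ∈ K` satisfying `Σ γᵢ α²ⁱ = β²`,
where `M_S' = α·D₅` and `M_T' = M_{1,5}⁻¹·diag(β, σβ, …, σ⁴β)`. -/
theorem stmt13 (K : Type*) [Field K] (hchar : (5 : K) ≠ 0)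
    (ζ : K) (hζ : IsPrimitiveRoot ζ 5)
    (a : K) (ha : a ≠ 0) (hnp : ¬∃ c : K, c ^ 5 = a)
    (L : Type*) [Field L] [Algebra K L] (α : L) (hα : α ^ 5 = algebraMap K L a)
    (hgen : Algebra.adjoin K {α} = ⊤)
    (σ : L ≃ₐ[K] L) (hσ : σ α = algebraMap K L ζ * α)
    (β : L) (hβ : β ≠ 0) (lam : K) (hlam : lam ≠ 0) :
    let u₁ : L := (σ ^ 4 : L ≃ₐ[K] L) β / β
    let u₂ : L := (σ ^ 3 : L ≃ₐ[K] L) β * (σ ^ 4 : L ≃ₐ[K] L) β / (β * σ β)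
    let lam' : L := algebraMap K L lam
    let Q' : MvPolynomial (ZMod 5) L :=
      (∑ i : ZMod 5, X i ^ 2)
        + C lam' * ∑ i : ZMod 5, C ((σ ^ (i.val + 1)) u₁) * (X i * X (i + 2))
        - C lam'⁻¹ * ∑ i : ZMod 5, C ((σ ^ (i.val + 3)) u₂) * (X i * X (i + 1))
    let act : Matrix (ZMod 5) (ZMod 5) L → MvPolynomial (ZMod 5) L →
        MvPolynomial (ZMod 5) L := fun N p =>
      aeval (fun i : ZMod 5 => ∑ j : ZMod 5, C (N i j) * X j) p
    let D5 : Matrix (ZMod 5) (ZMod 5) L :=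
      Matrix.diagonal fun i => algebraMap K L ζ ^ i.val
    let MS' : Matrix (ZMod 5) (ZMod 5) L := α • D5
    let M15 : Matrix (ZMod 5) (ZMod 5) L := Matrix.of fun i j => if j = i + 1 then 1 else 0
    let MT' : Matrix (ZMod 5) (ZMod 5) L :=
      M15⁻¹ * Matrix.diagonal fun i => (σ ^ i.val) β
    ∃ γ : ZMod 5 → K,
      act MT' Q' = ∑ i : ZMod 5, algebraMap K L (γ i) • act (MS' ^ i.val) Q' ∧
      ∑ i : ZMod 5, algebraMap K L (γ i) * α ^ (2 * i.val) = β ^ 2 := by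
  intro u₁ u₂ lam' Q' act D5 MS' M15 MT'
  obtain ⟨γ, hγ⟩ := exists_even_power_coords ha hα hgen (β ^ 2)
  refine ⟨γ, ?_, hγ⟩
  set z : L := algebraMap K L ζ with hz
  have hz5 : z ^ 5 = 1 := by rw [hz, ← map_pow, hζ.pow_eq_one, map_one]
  -- `b i` is the conjugate `σ^i β`, well defined for `i` modulo 5
  set b : ZMod 5 → L := fun i => (σ ^ i.val) β with hb
  have hσ5 : σ ^ 5 = 1 := sigma_pow_five hgen hσ hz5
  have hbn : ∀ n : ℕ, (σ ^ n) β = b (n : ZMod 5) := fun n => by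
    simp only [hb, ZMod.val_natCast]
    rw [pow_eq_pow_mod n hσ5]
  have hb0 : ∀ i, b i ≠ 0 := fun i => (map_ne_zero_iff _ (σ ^ i.val).injective).2 hβ
  have hadd : ∀ m n : ℕ, (σ ^ m) ((σ ^ n) β) = b ((m + n : ℕ) : ZMod 5) := fun m n => by
    rw [← AlgEquiv.mul_apply, ← pow_add, hbn]
  have hadd1 : ∀ m : ℕ, (σ ^ m) (σ β) = b ((m + 1 : ℕ) : ZMod 5) := fun m => by
    rw [← AlgEquiv.mul_apply, ← pow_succ, hbn]
  have hu₁ : ∀ i : ZMod 5, (σ ^ (i.val + 1)) u₁ = b i / b (i + 1) := fun i => by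
    simp only [u₁, map_div₀, hadd]
    simp only [hbn]
    push_cast [ZMod.natCast_zmod_val]
    rw [show i + 1 + 4 = i by revert i; decide]
  have hu₂ : ∀ i : ZMod 5, (σ ^ (i.val + 3)) u₂
      = b (i + 1) * b (i + 2) / (b (i + 3) * b (i + 4)) := fun i => by
    simp only [u₂, map_div₀, map_mul, hadd, hadd1]
    simp only [hbn]
    push_cast [ZMod.natCast_zmod_val]
    rw [show i + 3 + 3 = i + 1 by revert i; decide, show i + 3 + 4 = i + 2 by revert i; decide,
      show i + 3 + 1 = i + 4 by revert i; decide]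
  -- applying `σ^m` to `∑ γ_k α^(2k) = β²` gives the eigenvalue of `∑ γ_k (M_S')^k` on `x_i x_j`
  have key : ∀ i j m : ZMod 5, i + j = 2 * m →
      ∑ k : ZMod 5, algebraMap K L (γ k) * ((α * z ^ i.val) ^ k.val * (α * z ^ j.val) ^ k.val)
        = b m ^ 2 := fun i j m h => by
    have h1 : z ^ i.val * z ^ j.val = z ^ m.val * z ^ m.val := by
      rw [← pow_add, ← pow_add, pow_eq_pow_mod _ hz5, pow_eq_pow_mod (m.val + m.val) hz5]
      congr 1
      revert i j m; decide
    have h2 : b m ^ 2 = (σ ^ m.val) (β ^ 2) := by simp [hb]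
    rw [h2, ← hγ, map_sum]
    refine Finset.sum_congr rfl fun k _ => ?_
    rw [map_mul, AlgEquiv.commutes, map_pow, sigma_pow_apply hσ, ← hz, pow_mul, ← mul_pow]
    congr 2
    linear_combination α ^ 2 * h1
  have hM15 : M15⁻¹ = Matrix.of fun i j => if i = j + 1 then 1 else 0 := by
    refine Matrix.inv_eq_right_inv ?_
    ext i j
    simp [M15, Matrix.mul_apply, Matrix.one_apply, eq_comm]
  have hMT : ∀ i : ZMod 5, (∑ j : ZMod 5, C (MT' i j) * X j : MvPolynomial (ZMod 5) L)
      = C (b (i - 1)) * X (i - 1) := fun i => by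
    rw [Finset.sum_eq_single (i - 1)]
    · simp [MT', hM15, hb]
    · intro j _ hj
      have : i ≠ j + 1 := fun h => hj (by rw [h]; ring)
      simp [MT', hM15, this]
    · simp
  have hMS : ∀ k i : ZMod 5,
      (∑ j : ZMod 5, C ((MS' ^ k.val) i j) * X j : MvPolynomial (ZMod 5) L)
      = C ((α * z ^ i.val) ^ k.val) * X i := fun k i => by
    have h1 : MS' = Matrix.diagonal fun i : ZMod 5 => α * z ^ i.val := by
      simp only [MS', D5, ← Matrix.diagonal_smul]; rfl
    rw [h1, Matrix.diagonal_pow, Finset.sum_eq_single i]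
    · simp
    · intro j _ hj
      simp [Matrix.diagonal_apply_ne' _ hj]
    · simp
  have hQ : Q' = quad (fun _ => 1) (fun i => lam' * (b i / b (i + 1)))
      (fun i => -lam'⁻¹ * (b (i + 1) * b (i + 2) / (b (i + 3) * b (i + 4)))) := by
    simp only [Q', quad, hu₁, hu₂, Finset.mul_sum, C_mul, C_neg, C_1,
      one_mul, neg_mul, Finset.sum_neg_distrib, sub_eq_add_neg, mul_assoc]
  have hL : act MT' Q' = quad (fun i => b i ^ 2) (fun i => lam' * (b i * b (i + 1)))
      (fun i => -lam'⁻¹ * (b (i + 1) * b (i + 2) * b (i + 3) / b (i + 4))) := by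
    simp only [act, hMT]
    rw [hQ, aeval_quad_shift]
    congr 1
    · simp
    · funext i
      have := hb0 (i + 2)
      rw [show i + 1 + 1 = i + 2 by ring]
      field_simp
    · funext i
      rw [show i + 1 + 1 = i + 2 by ring, show i + 1 + 2 = i + 3 by ring,
        show i + 1 + 3 = i + 4 by ring, show i + 1 + 4 = i by revert i; decide]
      have h1 := hb0 (i + 4)
      have h2 := hb0 i
      field_simp
  rw [hL]
  simp only [act, hMS]
  simp only [hQ, aeval_quad_diag, sum_smul_quad]
  congr 1
  · funext i
    rw [← key i i i (by ring)]
    exact Finset.sum_congr rfl fun k _ => by ring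
  · funext i
    have h1 := hb0 (i + 1)
    trans lam' * (b i / b (i + 1)) * b (i + 1) ^ 2
    · field_simp
    · rw [← key i (i + 2) (i + 1) (by ring), Finset.mul_sum]
      exact Finset.sum_congr rfl fun k _ => by ring
  · funext i
    have h3 := hb0 (i + 3)
    have h4 := hb0 (i + 4)
    trans -lam'⁻¹ * (b (i + 1) * b (i + 2) / (b (i + 3) * b (i + 4))) * b (i + 3) ^ 2
    · field_simp
    · rw [← key i (i + 1) (i + 3) (by clear h3 h4; revert i; decide), Finset.mul_sum]
      exact Finset.sum_congr rfl fun k _ => by ring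
end

section
/- Let K be a field and let λ ∈ K be nonzero. Set A = −λ⁵ and define the five quadrics S₀ = x₀² − x₂x₃ + x₁x₄, S₁ = x₁² − x₀x₂ + A·x₃x₄, S₂ = x₂² − x₁x₃ − A·x₀x₄, S₃ = x₃² − x₀x₁ − x₂x₄, S₄ = A·x₄² + x₁x₂ − x₀x₃. Then for x ∈ K⁵, x satisfies q_i(x) = 0 for all i ∈ Z/5Z if and only if the point y = (x₀, −λx₁, λx₂, −x₃, λ⁻²x₄) satisfies S_i(y) = 0 for all i. (That is, the invertible diagonal map diag(1, −λ, λ, −1, λ⁻²) identifies the quintic model E_λ with the quintic model E_A when A = −λ⁵.) -/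
/-!
Under the diagonal substitution each quadric `S_i` pulls back to a nonzero scalar multiple of
`q_i`: with `A = -λ⁵` one has `S₀(y) = λ⁻¹ q₀(x)`, `S₁(y) = λ q₁(x)`, `S₂(y) = λ q₂(x)`,
`S₃(y) = λ⁻¹ q₃(x)` and `S₄(y) = -q₄(x)`. Hence the two systems have the same zeros.
-/

/-- the diagonal change of coordinates `diag(1, -λ, λ, -1, λ⁻²)`
identifies the quintic model `E_λ` (cut out by the `q_i`) with the standard quintic
model `E_A` (cut out by `S₀, …, S₄`) where `A = -λ⁵`. -/
theorem stmt15 (K : Type*) [Field K] (lam : K) (hlam : lam ≠ 0) (x : ZMod 5 → K) :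
    let A : K := -lam ^ 5
    let y : ZMod 5 → K := fun i =>
      if i = 0 then x 0
      else if i = 1 then -lam * x 1
      else if i = 2 then lam * x 2
      else if i = 3 then -x 3
      else lam⁻¹ ^ 2 * x 4
    ((∀ i : ZMod 5,
        lam * x i ^ 2 + lam ^ 2 * x (i - 2) * x (i + 2) - x (i - 1) * x (i + 1) = 0) ↔
      (y 0 ^ 2 - y 2 * y 3 + y 1 * y 4 = 0 ∧
       y 1 ^ 2 - y 0 * y 2 + A * y 3 * y 4 = 0 ∧
       y 2 ^ 2 - y 1 * y 3 - A * y 0 * y 4 = 0 ∧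
       y 3 ^ 2 - y 0 * y 1 - y 2 * y 4 = 0 ∧
       A * y 4 ^ 2 + y 1 * y 2 - y 0 * y 3 = 0)) := by
  intro A y
  have y0 : y 0 = x 0 := rfl
  have y1 : y 1 = -lam * x 1 := rfl
  have y2 : y 2 = lam * x 2 := rfl
  have y3 : y 3 = -x 3 := rfl
  have y4 : y 4 = lam⁻¹ ^ 2 * x 4 := rfl
  have hA : A = -lam ^ 5 := rfl
  clear_value A y
  -- The quadrics `q i` at `i = 0, …, 4`, with the indices reduced modulo 5.
  have hq : (∀ i : ZMod 5,
        lam * x i ^ 2 + lam ^ 2 * x (i - 2) * x (i + 2) - x (i - 1) * x (i + 1) = 0) ↔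
      (lam * x 0 ^ 2 + lam ^ 2 * x 3 * x 2 - x 4 * x 1 = 0 ∧
       lam * x 1 ^ 2 + lam ^ 2 * x 4 * x 3 - x 0 * x 2 = 0 ∧
       lam * x 2 ^ 2 + lam ^ 2 * x 0 * x 4 - x 1 * x 3 = 0 ∧
       lam * x 3 ^ 2 + lam ^ 2 * x 1 * x 0 - x 2 * x 4 = 0 ∧
       lam * x 4 ^ 2 + lam ^ 2 * x 2 * x 1 - x 3 * x 0 = 0) := by
    constructor
    · intro h
      exact ⟨h 0, h 1, h 2, h 3, h 4⟩
    · rintro ⟨h0, h1, h2, h3, h4⟩ i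
      fin_cases i
      exacts [h0, h1, h2, h3, h4]
  have e0 : y 0 ^ 2 - y 2 * y 3 + y 1 * y 4
      = lam⁻¹ * (lam * x 0 ^ 2 + lam ^ 2 * x 3 * x 2 - x 4 * x 1) := by
    rw [y0, y1, y2, y3, y4]; field_simp; ring
  have e1 : y 1 ^ 2 - y 0 * y 2 + A * y 3 * y 4
      = lam * (lam * x 1 ^ 2 + lam ^ 2 * x 4 * x 3 - x 0 * x 2) := by
    rw [y0, y1, y2, y3, y4, hA]; field_simp; ring
  have e2 : y 2 ^ 2 - y 1 * y 3 - A * y 0 * y 4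
      = lam * (lam * x 2 ^ 2 + lam ^ 2 * x 0 * x 4 - x 1 * x 3) := by
    rw [y0, y1, y2, y3, y4, hA]; field_simp; ring
  have e3 : y 3 ^ 2 - y 0 * y 1 - y 2 * y 4
      = lam⁻¹ * (lam * x 3 ^ 2 + lam ^ 2 * x 1 * x 0 - x 2 * x 4) := by
    rw [y0, y1, y2, y3, y4]; field_simp; ring
  have e4 : A * y 4 ^ 2 + y 1 * y 2 - y 0 * y 3
      = (-1) * (lam * x 4 ^ 2 + lam ^ 2 * x 2 * x 1 - x 3 * x 0) := by
    rw [y0, y1, y2, y3, y4, hA]; field_simp; ring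
  have hinv : lam⁻¹ ≠ 0 := inv_ne_zero hlam
  have hneg : (-1 : K) ≠ 0 := neg_ne_zero.mpr one_ne_zero
  rw [hq, e0, e1, e2, e3, e4, mul_eq_zero_iff_left hinv, mul_eq_zero_iff_left hlam,
    mul_eq_zero_iff_left hlam, mul_eq_zero_iff_left hinv, mul_eq_zero_iff_left hneg]
end
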